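/- arXiv:1212.0615 — 8 statements merged into one kernel-verified Lean document; each statement's English description precedes it below -/
import Mathlib

section
/- Let A be a unital alternative ring. If a, b ∈ A are invertible with inverses a⁻¹ and b⁻¹ respectively, then the product a*b is invertible, and its inverse is b⁻¹*a⁻¹; that is, (b⁻¹*a⁻¹)*(a*b) = 1 and (a*b)*(b⁻¹*a⁻¹) = 1. -/
/-- An element of a unital (not necessarily associative) ring is invertible if it has
a two-sided inverse. -/
def IsInv {A : Type*} [NonAssocRing A] (a : A) : Prop :=
  ∃ b : A, a * b = 1 ∧ b * a = 1

/-!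
In an alternative ring the Kleinfeld function
`f(w, x, y, z) = (wx, y, z) - x(w, y, z) - (x, y, z)w`, built from the associator `(x, y, z)`,
changes sign under odd permutations of its arguments. If `a * a' = 1`, then
`f(a, a', a, z) = 0 = f(a, a', a', z)` forces `(a, a', z) = 0` for every `z`. Hence
`(a * b) * (b' * a') = 1 - (ab, b', a') = 1 - f(a, b, b', a')`, and
`f(a, b, b', a') = f(a, a', b, b')` is a sum of terms that all vanish.
-/

theorem associator_one_left {A : Type*} [NonAssocRing A] (x y : A) : associator 1 x y = 0 := by
  simp only [associator, one_mul, sub_self]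

/-- The alternative laws for a multiplication, bundled as a mixin so that the theory of
alternative rings can be developed over any `NonUnitalNonAssocRing`. -/
class IsAlternative (A : Type*) [Mul A] : Prop where
  left_alternative (x y : A) : (x * x) * y = x * (x * y)
  right_alternative (x y : A) : (x * y) * y = x * (y * y)

/-- The Kleinfeld function `f(w, x, y, z) = (wx, y, z) - x(w, y, z) - (x, y, z)w`, which relates
the associator of a product to the associators of its factors. -/
def kleinfeld {A : Type*} [NonUnitalNonAssocRing A] (w x y z : A) : A :=
  associator (w * x) y z - x * associator w y z - associator x y z * w

namespace IsAlternative

section NonUnital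

variable {A : Type*} [NonUnitalNonAssocRing A] [IsAlternative A]

theorem associator_self_left (x y : A) : associator x x y = 0 :=
  sub_eq_zero.mpr (left_alternative x y)

theorem associator_self_right (x y : A) : associator x y y = 0 :=
  sub_eq_zero.mpr (right_alternative x y)

theorem associator_swap_left (x y z : A) : associator x y z = -associator y x z := by
  have polarized : AddMonoidHom.associator (x + y) (x + y) z = 0 := associator_self_left _ _
  simp only [map_add, AddMonoidHom.add_apply, AddMonoidHom.associator_apply,
    associator_self_left, zero_add, add_zero] at polarized
  exact eq_neg_of_add_eq_zero_right polarized

theorem associator_swap_right (x y z : A) : associator x y z = -associator x z y := by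
  have polarized : AddMonoidHom.associator x (y + z) (y + z) = 0 := associator_self_right _ _
  simp only [map_add, AddMonoidHom.add_apply, AddMonoidHom.associator_apply,
    associator_self_right, zero_add, add_zero] at polarized
  exact eq_neg_of_add_eq_zero_right polarized

theorem associator_rotate (x y z : A) : associator x y z = associator y z x := by
  rw [associator_swap_left, associator_swap_right, neg_neg]

theorem kleinfeld_self_right (w x y : A) : kleinfeld w x y y = 0 := by
  simp only [kleinfeld, associator_self_right, mul_zero, zero_mul, sub_zero]

theorem kleinfeld_swap_right (w x y z : A) : kleinfeld w x y z = -kleinfeld w x z y := by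
  simp only [kleinfeld, associator_swap_right _ y z, mul_neg, neg_mul]
  abel

theorem kleinfeld_alternating_sum (w x y z : A) :
    kleinfeld w x y z - kleinfeld x y z w + kleinfeld y z w x =
      ⁅w, associator x y z⁆ - ⁅x, associator y z w⁆ + ⁅y, associator z w x⁆
        - ⁅z, associator w x y⁆ := by
  have cocycle := associator_cocycle w x y z
  rw [associator_rotate w (x * y) z, ← associator_rotate (y * z) w x] at cocycle
  simp only [kleinfeld, Ring.lie_def]
  rw [associator_rotate w y z, associator_rotate x z w, associator_rotate y w x,
    ← sub_eq_zero, ← neg_eq_zero, ← cocycle]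
  abel

-- A cyclic shift negates the right-hand side of `kleinfeld_alternating_sum`, so the alternating
-- sum and its shift cancel; all but two of the Kleinfeld terms cancel as well.
theorem kleinfeld_rotate (w x y z : A) : kleinfeld w x y z = -kleinfeld x y z w := by
  have sum := kleinfeld_alternating_sum x y z w
  have shifted_sum := kleinfeld_alternating_sum y z w x
  grind

theorem kleinfeld_self_left (x y z : A) : kleinfeld x x y z = 0 := by
  rw [kleinfeld_rotate, kleinfeld_rotate, neg_neg, kleinfeld_self_right]

theorem kleinfeld_self_middle (w x z : A) : kleinfeld w x x z = 0 := by
  rw [kleinfeld_rotate, kleinfeld_self_left, neg_zero]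

theorem kleinfeld_swap_middle (w x y z : A) : kleinfeld w x y z = -kleinfeld w y x z := by
  rw [← neg_eq_iff_eq_neg, ← kleinfeld_rotate z w x y, kleinfeld_swap_right,
    kleinfeld_rotate z w y x, neg_neg]

end NonUnital

section Unital

variable {A : Type*} [NonAssocRing A] [IsAlternative A]

theorem associator_mul_self_eq_zero_of_mul_eq_one {a a' : A} (h : a * a' = 1) (z : A) :
    associator a a' z * a = 0 := by
  have vanishing : kleinfeld a a' a z = 0 := by
    rw [kleinfeld_swap_middle, kleinfeld_self_left, neg_zero]
  simpa [kleinfeld, h, associator_one_left, associator_self_left,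
    associator_swap_left a' a] using vanishing

theorem mul_associator_eq_zero_of_mul_eq_one {a a' : A} (h : a * a' = 1) (z : A) :
    a' * associator a a' z = 0 := by
  simpa [kleinfeld, h, associator_one_left, associator_self_left] using
    kleinfeld_self_middle a a' z

theorem associator_eq_zero_of_mul_eq_one {a a' : A} (h : a * a' = 1) (z : A) :
    associator a a' z = 0 := by
  set p := associator a a' z
  have hpa : p * a = 0 := associator_mul_self_eq_zero_of_mul_eq_one h z
  have hap : a' * p = 0 := mul_associator_eq_zero_of_mul_eq_one h z
  have hp : associator p a a' = 0 := by
    rw [← associator_rotate, associator, hap, hpa, zero_mul, mul_zero, sub_zero]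
  simpa [associator, hpa, h] using hp

theorem mul_mul_cancel_of_mul_eq_one {a a' : A} (h : a * a' = 1) (x : A) :
    (x * a) * a' = x := by
  have zero : associator x a a' = 0 := by
    rw [associator_rotate, associator_eq_zero_of_mul_eq_one h]
  rw [sub_eq_zero.mp zero, h, mul_one]

theorem associator_mul_eq_zero_of_mul_eq_one {a b a' b' : A} (ha : a * a' = 1) (hb : b * b' = 1) :
    associator (a * b) b' a' = 0 := by
  have ha_zero (z : A) : associator a a' z = 0 := associator_eq_zero_of_mul_eq_one ha z
  have hb_zero (z : A) : associator b b' z = 0 := associator_eq_zero_of_mul_eq_one hb z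
  calc
    associator (a * b) b' a' = kleinfeld a b b' a' := by
      simp [kleinfeld, hb_zero, associator_swap_right a b', ha_zero]
    _ = kleinfeld a a' b b' := by
      rw [kleinfeld_swap_right, kleinfeld_swap_middle, neg_neg]
    _ = 0 := by
      simp [kleinfeld, ha, associator_rotate _ b b', hb_zero]

end Unital

end IsAlternative

open IsAlternative in
theorem product_of_invertible_is_invertible_general {A : Type*} [NonAssocRing A]
    [IsAlternative A] {a b a' b' : A} (ha : a * a' = 1) (hb : b * b' = 1) :
    (a * b) * (b' * a') = 1 := by
  calc
    (a * b) * (b' * a') = ((a * b) * b') * a' :=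
      (sub_eq_zero.mp (associator_mul_eq_zero_of_mul_eq_one ha hb)).symm
    _ = a * a' := by rw [mul_mul_cancel_of_mul_eq_one hb]
    _ = 1 := ha

/-- In a unital alternative ring, the product of two invertible elements `a, b`
(with inverses `a'`, `b'`) is invertible with inverse `b' * a'`. -/
theorem product_of_invertible_is_invertible {A : Type*} [NonAssocRing A]
    (alt1 : ∀ x y : A, (x * x) * y = x * (x * y))
    (alt2 : ∀ x y : A, (x * y) * y = x * (y * y))
    (a b a' b' : A)
    (ha : a * a' = 1 ∧ a' * a = 1) (hb : b * b' = 1 ∧ b' * b = 1) :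
    IsInv (a * b) ∧ (b' * a') * (a * b) = 1 ∧ (a * b) * (b' * a') = 1 := by
  have : IsAlternative A := ⟨alt1, alt2⟩
  have right_inv := product_of_invertible_is_invertible_general ha.1 hb.1
  have left_inv := product_of_invertible_is_invertible_general hb.2 ha.2
  exact ⟨⟨b' * a', right_inv, left_inv⟩, left_inv, right_inv⟩
end

section
/- Let A be a unital alternative ring admitting a derivation with invertible values d. If I is a proper two-sided ideal of A (I ≠ A), then I*I = 0, i.e., a*b = 0 for all a, b ∈ I. -/
/-!
Since `I` contains no invertible element, `d x ∈ I` forces `d x = 0`. For `a, b ∈ I` we have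
`d (a * b) ∈ I`, so `d (a * b) = 0`, and it suffices to show that an `x ∈ I` with `d x = 0`
vanishes. The elements of `I` killed by `d` are annihilated on both sides by every value of `d`
and are stable under left multiplication. Choose `c` and `v` with `d c * v = 1`. Multiplying
`d (c * v) = 1 + c * d v` by `x` on the right gives `0 = x + (c * d v) * x`. Hence the associator
of `c, d v, x` is `-x`, whereas that of `c, x, d v` is `0`. In a right alternative ring the two
add up to `0`, so `x = 0`.
-/

theorem associator_swap_right {A : Type*} [NonUnitalNonAssocRing A]
    (ralt : ∀ x y : A, (x * y) * y = x * (y * y)) (x y z : A) :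
    associator x z y = -associator x y z := by
  have polarized := ralt x (y + z)
  simp only [mul_add, add_mul, ralt] at polarized
  simp only [associator_apply]
  rw [← sub_eq_zero] at polarized ⊢
  rw [← polarized]
  abel

theorem eq_univ_of_mem_of_mul_eq_one {A : Type*} [NonAssocRing A] {I : AddSubgroup A}
    (hIl : ∀ a x : A, x ∈ I → a * x ∈ I) (hIr : ∀ a x : A, x ∈ I → x * a ∈ I)
    {x b : A} (hx : x ∈ I) (hxb : x * b = 1) : (I : Set A) = Set.univ := by
  have one_mem : (1 : A) ∈ I := hxb ▸ hIr b x hx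
  exact Set.eq_univ_of_forall fun y ↦ mul_one y ▸ hIl y 1 one_mem

section Derivation

variable {A : Type*} [NonUnitalNonAssocRing A] {d : A → A} {I : AddSubgroup A}

theorem derivation_mul_eq_zero (hmul : ∀ x y : A, d (x * y) = d x * y + x * d y)
    (hIl : ∀ a x : A, x ∈ I → a * x ∈ I) (hdI : ∀ x : A, d x ∈ I → d x = 0)
    {x : A} (hx : x ∈ I) (hdx : d x = 0) (a : A) : d a * x = 0 := by
  have hd : d (a * x) = d a * x := by rw [hmul, hdx, mul_zero, add_zero]
  rw [← hd]
  exact hdI _ (hd ▸ hIl _ _ hx)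

theorem mul_derivation_eq_zero (hmul : ∀ x y : A, d (x * y) = d x * y + x * d y)
    (hIr : ∀ a x : A, x ∈ I → x * a ∈ I) (hdI : ∀ x : A, d x ∈ I → d x = 0)
    {x : A} (hx : x ∈ I) (hdx : d x = 0) (a : A) : x * d a = 0 := by
  have hd : d (x * a) = x * d a := by rw [hmul, hdx, zero_mul, zero_add]
  rw [← hd]
  exact hdI _ (hd ▸ hIr _ _ hx)

theorem derivation_mul_mem (hmul : ∀ x y : A, d (x * y) = d x * y + x * d y)
    (hIl : ∀ a x : A, x ∈ I → a * x ∈ I) (hIr : ∀ a x : A, x ∈ I → x * a ∈ I)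
    {a b : A} (ha : a ∈ I) (hb : b ∈ I) : d (a * b) ∈ I := by
  rw [hmul]
  exact I.add_mem (hIl _ _ hb) (hIr _ _ ha)

end Derivation

section RightAlternative

variable {A : Type*} [NonAssocRing A] {d : A → A} {I : AddSubgroup A}

theorem eq_zero_of_derivation_eq_zero (ralt : ∀ x y : A, (x * y) * y = x * (y * y))
    (hmul : ∀ x y : A, d (x * y) = d x * y + x * d y)
    (hIl : ∀ a x : A, x ∈ I → a * x ∈ I) (hIr : ∀ a x : A, x ∈ I → x * a ∈ I)
    (hdI : ∀ x : A, d x ∈ I → d x = 0) {c v : A} (hcv : d c * v = 1)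
    {x : A} (hx : x ∈ I) (hdx : d x = 0) : x = 0 := by
  have d_mul_x (a : A) : d a * x = 0 := derivation_mul_eq_zero hmul hIl hdI hx hdx a
  have x_mul_d (a : A) : x * d a = 0 := mul_derivation_eq_zero hmul hIr hdI hx hdx a
  have d_cx : d (c * x) = 0 := by rw [hmul, d_mul_x, hdx, mul_zero, add_zero]
  have cx_mul_d (a : A) : (c * x) * d a = 0 :=
    mul_derivation_eq_zero hmul hIr hdI (hIl c x hx) d_cx a
  have add_cdv_mul_x : x + (c * d v) * x = 0 := by
    rw [← d_mul_x (c * v), hmul, hcv, add_mul, one_mul]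
  have assoc_dv_x : associator c (d v) x = -x := by
    rw [associator_apply, d_mul_x, mul_zero, sub_zero, eq_neg_of_add_eq_zero_right add_cdv_mul_x]
  have assoc_x_dv : associator c x (d v) = 0 := by
    rw [associator_apply, cx_mul_d, x_mul_d, mul_zero, sub_zero]
  rw [← neg_eq_zero, ← assoc_dv_x, associator_swap_right ralt, assoc_x_dv, neg_zero]

theorem proper_ideal_square_zero_general (ralt : ∀ x y : A, (x * y) * y = x * (y * y))
    (hmul : ∀ x y : A, d (x * y) = d x * y + x * d y)
    (hnz : ∃ x : A, d x ≠ 0)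
    (hval : ∀ x : A, d x = 0 ∨ ∃ b : A, d x * b = 1)
    (hIl : ∀ a x : A, x ∈ I → a * x ∈ I)
    (hIr : ∀ a x : A, x ∈ I → x * a ∈ I)
    (hIproper : (I : Set A) ≠ Set.univ) :
    ∀ a ∈ I, ∀ b ∈ I, a * b = 0 := by
  intro a ha b hb
  have hdI (x : A) (hdx : d x ∈ I) : d x = 0 := (hval x).resolve_right fun ⟨_, hinv⟩ ↦
    hIproper (eq_univ_of_mem_of_mul_eq_one hIl hIr hdx hinv)
  obtain ⟨c, hc⟩ := hnz
  obtain ⟨v, hcv⟩ := (hval c).resolve_left hc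
  exact eq_zero_of_derivation_eq_zero ralt hmul hIl hIr hdI hcv (hIl a b hb)
    (hdI _ (derivation_mul_mem hmul hIl hIr ha hb))

end RightAlternative

/-- If `A` is a unital alternative ring admitting a derivation with invertible values `d`,
then every proper two-sided ideal `I` of `A` satisfies `I * I = 0`. -/
theorem proper_ideal_square_zero {A : Type*} [NonAssocRing A]
    (alt1 : ∀ x y : A, (x * x) * y = x * (x * y))
    (alt2 : ∀ x y : A, (x * y) * y = x * (y * y))
    (d : A → A)
    (hadd : ∀ x y : A, d (x + y) = d x + d y)
    (hmul : ∀ x y : A, d (x * y) = d x * y + x * d y)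
    (hnz : ∃ x : A, d x ≠ 0)
    (hval : ∀ x : A, d x = 0 ∨ IsInv (d x))
    (I : AddSubgroup A)
    (hIl : ∀ a x : A, x ∈ I → a * x ∈ I)
    (hIr : ∀ a x : A, x ∈ I → x * a ∈ I)
    (hIproper : (I : Set A) ≠ Set.univ) :
    ∀ a ∈ I, ∀ b ∈ I, a * b = 0 :=
  proper_ideal_square_zero_general alt2 hmul hnz
    (fun x ↦ (hval x).imp_right fun ⟨b, hb, _⟩ ↦ ⟨b, hb⟩) hIl hIr hIproper
end

section
/- Let A be a unital alternative ring admitting a derivation with invertible values d, and suppose 1 + 1 ≠ 0 in A. Then A is simple: the only two-sided ideals of A are 0 and A. -/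
/-!
Invertible elements of an alternative ring satisfy `a⁻¹ * (a * x) = x`, so the nonzero values of `d`
can be cancelled on the left. Let `I` be a proper two-sided ideal. The only value of `d` in `I`
is `0`, and `d` is injective on `I`: if `x ∈ I` and `d x = 0`, then `d (y * x) = d y * x` lies
in `I`, hence vanishes, and choosing `d y ≠ 0` gives `x = 0`. For `x ∈ I` the value `d (x * x)`
lies in `I`, so `x * x = 0`. Expanding `d (d (x * x)) = 0` shows `d x * (d x + d x) ∈ I`; if
`x ≠ 0`, cancelling gives `d (x + x) ∈ I`, so `d x + d x = 0` and finally `1 + 1 = 0`.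
-/

/-- Alternative rings: associativity holds whenever two adjacent factors coincide. -/
class IsAlternativeRing (A : Type*) [NonUnitalNonAssocRing A] : Prop where
  mul_self_mul (x y : A) : (x * x) * y = x * (x * y)
  mul_mul_self (x y : A) : (x * y) * y = x * (y * y)

namespace IsAlternativeRing

section NonUnital

variable {A : Type*} [NonUnitalNonAssocRing A] [IsAlternativeRing A]

theorem associator_self_left (x y : A) : associator x x y = 0 :=
  sub_eq_zero.2 (mul_self_mul x y)

theorem associator_self_right (x y : A) : associator x y y = 0 :=
  sub_eq_zero.2 (mul_mul_self x y)

theorem associator_swap_left (x y z : A) : associator y x z = -associator x y z := by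
  refine eq_neg_of_add_eq_zero_left ?_
  calc associator y x z + associator x y z
      = associator (x + y) (x + y) z - associator x x z - associator y y z := by
        simp only [associator_apply, add_mul, mul_add]; abel
    _ = 0 := by simp only [associator_self_left, sub_zero]

theorem associator_swap_right (x y z : A) : associator x z y = -associator x y z := by
  refine eq_neg_of_add_eq_zero_left ?_
  calc associator x z y + associator x y z
      = associator x (y + z) (y + z) - associator x y y - associator x z z := by
        simp only [associator_apply, add_mul, mul_add]; abel
    _ = 0 := by simp only [associator_self_right, sub_zero]

theorem associator_rotate (x y z : A) : associator y z x = associator x y z := by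
  rw [associator_swap_right, associator_swap_left, neg_neg]

theorem associator_mul_self_left (x y z : A) :
    associator (x * x) y z = associator x (y * x) z + associator x y (x * z) := by
  have cocycle := associator_cocycle y x x z
  rw [associator_self_left, associator_self_right, mul_zero, zero_mul,
    associator_swap_left x (y * x), associator_swap_left (x * x) y,
    associator_swap_left x y] at cocycle
  grind

theorem associator_self_mul_middle (x y z : A) :
    associator x (x * y) z = associator x y z * x := by
  have cocycle := associator_cocycle y z x x
  rw [associator_self_right, associator_self_right, mul_zero,
    associator_rotate x y (z * x), associator_rotate (x * x) y z,
    associator_rotate x y z] at cocycle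
  have linearized := associator_mul_self_left x z y
  rw [associator_swap_right (x * x) y z, associator_swap_right x y (z * x),
    associator_swap_right x (x * y) z] at linearized
  grind

theorem associator_mul_self_middle (x y z : A) :
    associator x (y * x) z = x * associator x y z := by
  have cocycle := associator_cocycle x x z y
  rw [associator_self_left, associator_self_left, zero_mul,
    associator_swap_right (x * x) y z, associator_swap_right x y (x * z),
    associator_swap_right x y z, mul_neg] at cocycle
  have linearized := associator_mul_self_left x y z
  grind

end NonUnital

variable {A : Type*} [NonAssocRing A] [IsAlternativeRing A]

theorem associator_eq_zero_of_mul_eq_one {a b : A} (hab : a * b = 1) (hba : b * a = 1) (x : A) :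
    associator a b x = 0 := by
  set w := associator a b x with hw
  have one_middle (y z : A) : associator y 1 z = 0 := by simp [associator_apply]
  have aw : a * w = 0 := by
    rw [hw, ← associator_mul_self_middle, hba, one_middle]
  have wa : w * a = 0 := by
    rw [hw, ← associator_self_mul_middle, hab, one_middle]
  have wb : w * b = 0 := by
    rw [hw, associator_swap_left b a x, neg_mul, ← associator_self_mul_middle, hba, one_middle,
      neg_zero]
  -- The associator of `a`, `b` and `w` itself is `-w` in one order and `0` in another.
  calc w = -associator w a b := by rw [associator_apply, wa, hab]; simp
    _ = associator a w b := (associator_swap_left w a b).symm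
    _ = 0 := by rw [associator_apply, aw, wb]; simp

end IsAlternativeRing

section LeftInverseProperty

variable {A : Type*} [NonAssocRing A]

/-- The left inverse property of a single element: multiplication by `a` on the left is undone by
multiplication by some `b` on the left. Taking `x = 1` shows `b * a = 1`; without associativity
the converse can fail. -/
def HasLeftInverseProperty (a : A) : Prop :=
  ∃ b : A, ∀ x, b * (a * x) = x

theorem IsInv.hasLeftInverseProperty [IsAlternativeRing A] {a : A} (ha : IsInv a) :
    HasLeftInverseProperty a := by
  obtain ⟨b, hab, hba⟩ := ha
  refine ⟨b, fun x ↦ ?_⟩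
  have h := IsAlternativeRing.associator_eq_zero_of_mul_eq_one hba hab x
  rw [associator_apply, hba, one_mul, sub_eq_zero] at h
  exact h.symm

namespace HasLeftInverseProperty

variable {a x : A}

theorem eq_zero_of_mul_eq_zero (ha : HasLeftInverseProperty a) (h : a * x = 0) : x = 0 := by
  obtain ⟨b, hb⟩ := ha
  rw [← hb x, h, mul_zero]

theorem mem_of_mul_mem (ha : HasLeftInverseProperty a) {I : TwoSidedIdeal A} (h : a * x ∈ I) :
    x ∈ I := by
  obtain ⟨b, hb⟩ := ha
  exact hb x ▸ I.mul_mem_left b _ h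

theorem eq_top_of_mem (ha : HasLeftInverseProperty a) {I : TwoSidedIdeal A} (h : a ∈ I) :
    I = ⊤ :=
  I.eq_top (ha.mem_of_mul_mem ((mul_one a).symm ▸ h))

end HasLeftInverseProperty

end LeftInverseProperty

section Derivation

variable {A : Type*} [NonAssocRing A] {d : A →+ A} {I : TwoSidedIdeal A} {x : A}

theorem map_eq_zero_of_map_mem (hval : ∀ x, d x = 0 ∨ HasLeftInverseProperty (d x))
    (hI : I ≠ ⊤) (hx : d x ∈ I) : d x = 0 :=
  (hval x).resolve_right fun h ↦ hI (h.eq_top_of_mem hx)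

theorem eq_zero_of_mem_of_map_eq_zero (hmul : ∀ x y, d (x * y) = d x * y + x * d y)
    (hnz : ∃ x, d x ≠ 0) (hval : ∀ x, d x = 0 ∨ HasLeftInverseProperty (d x))
    (hI : I ≠ ⊤) (hx : x ∈ I) (hdx : d x = 0) : x = 0 := by
  obtain ⟨y, hy⟩ := hnz
  have map_mul : d (y * x) = d y * x := by rw [hmul, hdx, mul_zero, add_zero]
  have map_mem : d (y * x) ∈ I := map_mul ▸ I.mul_mem_left _ _ hx
  exact ((hval y).resolve_left hy).eq_zero_of_mul_eq_zero
    (map_mul ▸ map_eq_zero_of_map_mem hval hI map_mem)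

theorem mul_self_eq_zero_of_mem (hmul : ∀ x y, d (x * y) = d x * y + x * d y)
    (hnz : ∃ x, d x ≠ 0) (hval : ∀ x, d x = 0 ∨ HasLeftInverseProperty (d x))
    (hI : I ≠ ⊤) (hx : x ∈ I) : x * x = 0 := by
  refine eq_zero_of_mem_of_map_eq_zero hmul hnz hval hI (I.mul_mem_left _ _ hx) ?_
  refine map_eq_zero_of_map_mem hval hI ?_
  rw [hmul]
  exact I.add_mem (I.mul_mem_left _ _ hx) (I.mul_mem_right _ _ hx)

theorem map_mul_map_add_map_mem (hmul : ∀ x y, d (x * y) = d x * y + x * d y)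
    (hx : x ∈ I) (hxx : x * x = 0) : d x * (d x + d x) ∈ I := by
  have second_derivative : d (d x) * x + d x * (d x + d x) + x * d (d x) = 0 :=
    calc d (d x) * x + d x * (d x + d x) + x * d (d x)
        = d (d (x * x)) := by simp only [hmul, map_add, mul_add]; abel
      _ = 0 := by rw [hxx, map_zero, map_zero]
  have h : d x * (d x + d x) = -(d (d x) * x + x * d (d x)) := by grind
  rw [h]
  exact I.neg_mem (I.add_mem (I.mul_mem_left _ _ hx) (I.mul_mem_right _ _ hx))

theorem one_add_one_eq_zero_of_ne_bot_of_ne_top (hmul : ∀ x y, d (x * y) = d x * y + x * d y)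
    (hnz : ∃ x, d x ≠ 0) (hval : ∀ x, d x = 0 ∨ HasLeftInverseProperty (d x))
    (hbot : I ≠ ⊥) (htop : I ≠ ⊤) : (1 : A) + 1 = 0 := by
  obtain ⟨x, hx, hx0 : x ≠ 0⟩ := SetLike.exists_of_lt (bot_lt_iff_ne_bot.2 hbot)
  have hdx : HasLeftInverseProperty (d x) := (hval x).resolve_left fun h ↦
    hx0 (eq_zero_of_mem_of_map_eq_zero hmul hnz hval htop hx h)
  have hxx : x * x = 0 := mul_self_eq_zero_of_mem hmul hnz hval htop hx
  have map_mem : d (x + x) ∈ I := by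
    rw [map_add]
    exact hdx.mem_of_mul_mem (map_mul_map_add_map_mem hmul hx hxx)
  have map_eq_zero : d (x + x) = 0 := map_eq_zero_of_map_mem hval htop map_mem
  refine hdx.eq_zero_of_mul_eq_zero ?_
  rw [mul_add, mul_one, ← map_add, map_eq_zero]

theorem char_ne_two_implies_simple_general (hmul : ∀ x y, d (x * y) = d x * y + x * d y)
    (hnz : ∃ x, d x ≠ 0) (hval : ∀ x, d x = 0 ∨ HasLeftInverseProperty (d x))
    (h2 : (1 : A) + 1 ≠ 0) : IsSimpleRing A := by
  have : Nontrivial A := ⟨_, _, h2⟩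
  refine .of_eq_bot_or_eq_top fun I ↦ or_iff_not_imp_left.2 fun hbot ↦ ?_
  by_contra htop
  exact h2 (one_add_one_eq_zero_of_ne_bot_of_ne_top hmul hnz hval hbot htop)

end Derivation

theorem eq_bot_or_coe_eq_univ_of_isSimpleRing {A : Type*} [NonUnitalNonAssocRing A]
    [IsSimpleRing A] (I : AddSubgroup A) (hleft : ∀ a x : A, x ∈ I → a * x ∈ I)
    (hright : ∀ a x : A, x ∈ I → x * a ∈ I) : I = ⊥ ∨ (I : Set A) = Set.univ := by
  let J : TwoSidedIdeal A :=
    .mk' I I.zero_mem I.add_mem I.neg_mem (hleft _ _) (hright _ _)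
  have coe_J : (J : Set A) = I := TwoSidedIdeal.coe_mk' ..
  refine (eq_bot_or_eq_top J).imp (fun hJ ↦ ?_) fun hJ ↦ ?_
  · rw [← SetLike.coe_set_eq, ← coe_J, hJ, TwoSidedIdeal.coe_bot, AddSubgroup.coe_bot]
  · rw [← coe_J, hJ, TwoSidedIdeal.coe_top]

/-- If `A` is a unital alternative ring with `1 + 1 ≠ 0` admitting a derivation with
invertible values `d`, then `A` is simple: the only two-sided ideals are `0` and `A`. -/
theorem char_ne_two_implies_simple {A : Type*} [NonAssocRing A]
    (alt1 : ∀ x y : A, (x * x) * y = x * (x * y))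
    (alt2 : ∀ x y : A, (x * y) * y = x * (y * y))
    (d : A → A)
    (hadd : ∀ x y : A, d (x + y) = d x + d y)
    (hmul : ∀ x y : A, d (x * y) = d x * y + x * d y)
    (hnz : ∃ x : A, d x ≠ 0)
    (hval : ∀ x : A, d x = 0 ∨ IsInv (d x))
    (h2 : (1 : A) + 1 ≠ 0) :
    ∀ I : AddSubgroup A,
      (∀ a x : A, x ∈ I → a * x ∈ I) →
      (∀ a x : A, x ∈ I → x * a ∈ I) →
      I = ⊥ ∨ (I : Set A) = Set.univ := by
  have : IsAlternativeRing A := ⟨alt1, alt2⟩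
  have : IsSimpleRing A := char_ne_two_implies_simple_general (d := AddMonoidHom.mk' d hadd)
    hmul hnz (fun x ↦ (hval x).imp_right IsInv.hasLeftInverseProperty) h2
  exact eq_bot_or_coe_eq_univ_of_isSimpleRing
end

section
/- Let A be a unital alternative ring admitting a derivation with invertible values d. Then A is d-simple: every two-sided ideal I of A that is invariant under d (i.e., d(I) ⊆ I) equals 0 or A. -/
/-!
If some `x ∈ I` has `d x ≠ 0`, then `I` contains the invertible element `d x`. Otherwise `d`
vanishes on `I`, and the Leibniz rule gives `d a * x = d (a * x) - a * d x = 0` for all `a ∈ A` and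
`x ∈ I`. Take `u = d a ≠ 0` and `b` with `u * b = 1`. Linearizing the right alternative law gives
`x = (u * b) * x + (u * x) * b = u * (b * x + x * b)`, which vanishes since `u` annihilates `I`.
-/

theorem right_alternative_linearized {R : Type*} [NonUnitalNonAssocRing R]
    (halt : ∀ x y : R, (x * y) * y = x * (y * y)) (x y z : R) :
    (x * y) * z + (x * z) * y = x * (y * z + z * y) := by
  linear_combination (norm := (simp only [mul_add, add_mul]; abel))
    halt x (y + z) - halt x y - halt x z

theorem eq_univ_of_mem_of_mul_eq_one_s7 {M : Type*} [MulOneClass M] {I : Set M}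
    (hIr : ∀ a x : M, x ∈ I → x * a ∈ I) {u b : M} (hu : u ∈ I) (hub : u * b = 1) :
    I = Set.univ := by
  have one_mem : (1 : M) ∈ I := hub ▸ hIr b u hu
  exact Set.eq_univ_of_forall fun y => one_mul y ▸ hIr y 1 one_mem

theorem apply_mul_eq_zero_of_leibniz {R : Type*} [NonUnitalNonAssocSemiring R] {d : R → R}
    (hmul : ∀ x y : R, d (x * y) = d x * y + x * d y) {I : Set R}
    (hIl : ∀ a x : R, x ∈ I → a * x ∈ I) (hdI : ∀ x ∈ I, d x = 0) (a : R) {x : R} (hx : x ∈ I) :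
    d a * x = 0 :=
  calc
    d a * x = d a * x + a * d x := by rw [hdI x hx, mul_zero, add_zero]
    _ = d (a * x) := (hmul a x).symm
    _ = 0 := hdI _ (hIl a x hx)

section Unital

variable {A : Type*} [NonAssocRing A]

theorem eq_mul_add_of_mul_eq_one_of_mul_eq_zero
    (halt : ∀ x y : A, (x * y) * y = x * (y * y)) {u b x : A}
    (hub : u * b = 1) (hux : u * x = 0) :
    x = u * (b * x + x * b) :=
  calc
    x = (u * b) * x + (u * x) * b := by rw [hub, hux, one_mul, zero_mul, add_zero]
    _ = u * (b * x + x * b) := right_alternative_linearized halt u b x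

theorem subset_zero_of_mul_eq_one_of_forall_mul_eq_zero
    (halt : ∀ x y : A, (x * y) * y = x * (y * y)) {I : Set A}
    (hIl : ∀ a x : A, x ∈ I → a * x ∈ I) (hIr : ∀ a x : A, x ∈ I → x * a ∈ I)
    {u b : A} (hub : u * b = 1) (huI : ∀ x ∈ I, u * x = 0) : I ⊆ {0} := fun x hx =>
  calc
    x = u * (b * x + x * b) := eq_mul_add_of_mul_eq_one_of_mul_eq_zero halt hub (huI x hx)
    _ = 0 := by rw [mul_add, huI _ (hIl b x hx), huI _ (hIr b x hx), add_zero]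

theorem d_simple_of_derivation_with_invertible_values_general
    (halt : ∀ x y : A, (x * y) * y = x * (y * y)) {d : A → A}
    (hmul : ∀ x y : A, d (x * y) = d x * y + x * d y) (hnz : ∃ x : A, d x ≠ 0)
    (hval : ∀ x : A, d x = 0 ∨ ∃ b : A, d x * b = 1) {I : Set A}
    (hIl : ∀ a x : A, x ∈ I → a * x ∈ I) (hIr : ∀ a x : A, x ∈ I → x * a ∈ I)
    (hId : ∀ x : A, x ∈ I → d x ∈ I) :
    I ⊆ {0} ∨ I = Set.univ := by
  by_cases hdI : ∀ x ∈ I, d x = 0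
  · obtain ⟨a, ha⟩ := hnz
    obtain ⟨b, hb⟩ := (hval a).resolve_left ha
    exact .inl <| subset_zero_of_mul_eq_one_of_forall_mul_eq_zero halt hIl hIr hb
      fun _ hx => apply_mul_eq_zero_of_leibniz hmul hIl hdI a hx
  · push Not at hdI
    obtain ⟨x, hx, hdx⟩ := hdI
    obtain ⟨b, hb⟩ := (hval x).resolve_left hdx
    exact .inr (eq_univ_of_mem_of_mul_eq_one_s7 hIr (hId x hx) hb)

end Unital

/-- If `A` is a unital alternative ring admitting a derivation with invertible values `d`,
then `A` is `d`-simple: every `d`-invariant two-sided ideal is `0` or `A`. -/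
theorem d_simple_of_derivation_with_invertible_values {A : Type*} [NonAssocRing A]
    (alt1 : ∀ x y : A, (x * x) * y = x * (x * y))
    (alt2 : ∀ x y : A, (x * y) * y = x * (y * y))
    (d : A → A)
    (hadd : ∀ x y : A, d (x + y) = d x + d y)
    (hmul : ∀ x y : A, d (x * y) = d x * y + x * d y)
    (hnz : ∃ x : A, d x ≠ 0)
    (hval : ∀ x : A, d x = 0 ∨ IsInv (d x))
    (I : AddSubgroup A)
    (hIl : ∀ a x : A, x ∈ I → a * x ∈ I)
    (hIr : ∀ a x : A, x ∈ I → x * a ∈ I)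
    (hId : ∀ x : A, x ∈ I → d x ∈ I) :
    I = ⊥ ∨ (I : Set A) = Set.univ := by
  have hval_right (x : A) : d x = 0 ∨ ∃ b, d x * b = 1 :=
    (hval x).imp_right fun ⟨b, hb, _⟩ => ⟨b, hb⟩
  exact (d_simple_of_derivation_with_invertible_values_general alt2 hmul hnz hval_right
    hIl hIr hId).imp_left (AddSubgroup.eq_bot_iff_forall I).mpr
end

section
/- Let A be a finite-dimensional alternative algebra over a field of characteristic zero. Then A is nilpotent if and only if A admits an invertible (bijective) Leibniz-derivation of some order n ≥ 2. -/
/-- The left-normed product `((x₁x₂)x₃)⋯xₙ` of a list of elements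
(`0` for the empty list, which we never use). -/
def lnProd {A : Type*} [Mul A] [Zero A] : List A → A
  | [] => 0
  | a :: l => l.foldl (· * ·) a

/-- A Leibniz-derivation of order `n`: a linear endomorphism `φ` with
`φ(x₁⋯xₙ) = Σᵢ x₁⋯φ(xᵢ)⋯xₙ` (left-normed products). -/
def IsLeibnizDer {F A : Type*} [Field F] [NonUnitalNonAssocRing A] [Module F A]
    (n : ℕ) (φ : A →ₗ[F] A) : Prop :=
  ∀ x : Fin n → A,
    φ (lnProd (List.ofFn x)) =
      ∑ i : Fin n, lnProd (List.ofFn (Function.update x i (φ (x i))))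

/-- `IsProd n a` : `a` is a product of `n` elements of `A` under some
distribution of parentheses. -/
inductive IsProd {A : Type*} [Mul A] : ℕ → A → Prop
  | single (a : A) : IsProd 1 a
  | mul {m n : ℕ} {x y : A} : IsProd m x → IsProd n y → IsProd (m + n) (x * y)

/-!
Let `φ` be an invertible Leibniz-derivation of order `n` of a finite-dimensional algebra `A`, and
write `L x` and `R x` for the left and right multiplications by `x`. Over an algebraically closed
field, if `x ≠ 0` lies in the generalized eigenspace of `φ` for `c`, then `c ≠ 0` and
`(R x) ^ (n - 1)` maps the generalized eigenspace for `μ` into the one for `μ + (n - 1) c`; hence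
`R x` is nilpotent and has trace `0`. Since the trace is linear and compatible with base change,
`tr (R x) = 0` for every `x ∈ A`, over any field of characteristic zero.

If `A` is alternative, then `(R x) ^ m = R (x ^ m)`, so that all powers of `R x` have trace `0` and
`R x` is nilpotent; in turn `x`, and then `L x`, is nilpotent. By Jacobson's theorem on weakly
closed sets, the spaces of all `R x` and of all `L x` are nilpotent, and so is their sum because of
`L x * R y = R y * L x + L (x * y) - L x * L y`. This is the nilpotency of `A`.
-/

section OrderedMonoid

variable {M : Type*} [Monoid M] [Preorder M] [MulLeftMono M] [MulRightMono M] {a b : M}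

theorem mul_pow_le_pow_mul_of_mul_le_mul (h : a * b ≤ b * a) (n : ℕ) : a * b ^ n ≤ b ^ n * a := by
  induction n with
  | zero => simp
  | succ n ih =>
    calc a * b ^ (n + 1) = a * b ^ n * b := by rw [pow_succ, mul_assoc]
      _ ≤ b ^ n * (a * b) := by rw [← mul_assoc]; gcongr
      _ ≤ b ^ n * (b * a) := by gcongr
      _ = b ^ (n + 1) * a := by rw [pow_succ, mul_assoc]

theorem mul_pow_le_pow_mul_pow_of_mul_le_mul (h : a * b ≤ b * a) (n : ℕ) :
    (b * a) ^ n ≤ b ^ n * a ^ n := by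
  induction n with
  | zero => simp
  | succ n ih =>
    calc (b * a) ^ (n + 1) ≤ b * a * (b ^ n * a ^ n) := by rw [pow_succ']; gcongr
      _ = b * (a * b ^ n * a ^ n) := by simp only [mul_assoc]
      _ ≤ b * (b ^ n * a * a ^ n) :=
        mul_le_mul_right (mul_le_mul_left (mul_pow_le_pow_mul_of_mul_le_mul h n) _) b
      _ = b ^ (n + 1) * a ^ (n + 1) := by simp only [pow_succ', mul_assoc]

end OrderedMonoid

section IdemSemiring

variable {K : Type*} [IdemSemiring K] {a b u : K}

theorem isNilpotent_of_le (hb : IsNilpotent b) (hab : a ≤ b) : IsNilpotent a := by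
  obtain ⟨n, hn⟩ := hb
  exact ⟨n, nonpos_iff_eq_zero.mp (hn ▸ pow_le_pow_left' hab n)⟩

theorem add_pow_le_pow_add_pow_mul (h1u : 1 ≤ u) (hau : a ≤ u) (hbu : b ≤ u)
    (h : a * u ≤ u * a) (n : ℕ) : (a + b) ^ n ≤ b ^ n + u ^ n * a := by
  induction n with
  | zero => simp
  | succ n ih =>
    have a_mul_le : a * b ^ n ≤ u ^ (n + 1) * a :=
      calc a * b ^ n ≤ a * u ^ n := by gcongr
        _ ≤ u ^ n * a := mul_pow_le_pow_mul_of_mul_le_mul h n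
        _ ≤ u ^ (n + 1) * a := by gcongr; exact n.le_succ
    have add_mul_le : (a + b) * (u ^ n * a) ≤ u ^ (n + 1) * a := by
      rw [pow_succ', mul_assoc]
      gcongr
      exact add_le hau hbu
    calc (a + b) ^ (n + 1) ≤ (a + b) * (b ^ n + u ^ n * a) := by rw [pow_succ']; gcongr
      _ = a * b ^ n + b ^ (n + 1) + (a + b) * (u ^ n * a) := by
        rw [mul_add, add_mul a b (b ^ n), ← pow_succ']
      _ ≤ b ^ (n + 1) + u ^ (n + 1) * a :=
        add_le (add_le (a_mul_le.trans le_add_self) le_self_add) (add_mul_le.trans le_add_self)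

-- With `u = 1 + a + b`, the relation lets every `a` be moved to the right of `u`, so `(a + b) ^ k`
-- is dominated by `u ^ k * a` as soon as `b ^ k = 0`.
theorem isNilpotent_add_of_mul_le (ha : IsNilpotent a) (hb : IsNilpotent b)
    (hab : a * b ≤ (1 + a + b) * a) : IsNilpotent (a + b) := by
  obtain ⟨r, har⟩ := ha
  obtain ⟨k, hbk⟩ := hb
  set u := 1 + a + b with hu
  have one_add_le : 1 + a ≤ u := le_self_add
  have mul_le : a * u ≤ u * a :=
    calc a * u = (1 + a) * a + a * b := by rw [hu]; noncomm_ring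
      _ ≤ u * a := add_le (by gcongr) hab
  have add_pow_le : (a + b) ^ k ≤ u ^ k * a := by
    simpa [hbk] using add_pow_le_pow_add_pow_mul (le_self_add.trans one_add_le)
      (le_add_self.trans one_add_le) le_add_self mul_le k
  have pow_eq_zero : (u ^ k * a) ^ r = 0 := by
    have := mul_pow_le_pow_mul_pow_of_mul_le_mul (mul_pow_le_pow_mul_of_mul_le_mul mul_le k) r
    simpa [har] using this
  exact (isNilpotent_of_le ⟨r, pow_eq_zero⟩ add_pow_le).of_pow

end IdemSemiring

section WeaklyClosed

variable {R B : Type*} [CommRing R] [Ring B] [Algebra R B]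

/-- Weakly closed sets in the sense of Jacobson: any two elements have a combination
`f * g + γ • (g * f)` in the set, where the scalar `γ` may depend on `f` and `g`. -/
def IsWeaklyClosed (R : Type*) {B : Type*} [CommRing R] [Ring B] [Algebra R B] (W : Set B) : Prop :=
  ∀ f ∈ W, ∀ g ∈ W, ∃ γ : R, f * g + γ • (g * f) ∈ W

theorem isNilpotent_span_singleton {w : B} (hw : IsNilpotent w) :
    IsNilpotent (Submodule.span R {w}) := by
  obtain ⟨n, hn⟩ := hw
  exact ⟨n, by simp [Submodule.span_pow, hn]⟩

-- Applying `T ↦ S * T + T * S` to `⊤` often enough gives `0`; `w` is chosen in `W \ S` inside as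
-- high an iterate as possible.
theorem IsWeaklyClosed.exists_forall_mem {W : Set B} (hW : IsWeaklyClosed R W)
    {S : Submodule R B} (hS : IsNilpotent S) (hWS : ¬ W ⊆ S) :
    ∃ w ∈ W, w ∉ S ∧ ∀ c ∈ W ∩ S, ∃ γ : R, c * w + γ • (w * c) ∈ S := by
  let D : Module.End ℕ (Submodule R B) := LinearMap.mulLeft ℕ S + LinearMap.mulRight ℕ S
  have D_apply (T : Submodule R B) : D T = S * T + T * S := rfl
  have hD : IsNilpotent D := (LinearMap.commute_mulLeft_right S S).isNilpotent_add
    ((LinearMap.isNilpotent_mulLeft_iff ℕ S).mpr hS)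
    ((LinearMap.isNilpotent_mulRight_iff ℕ S).mpr hS)
  by_contra! no_escape
  have mem_pow (n : ℕ) : ∃ w ∈ W, w ∉ S ∧ w ∈ (D ^ n) ⊤ := by
    induction n with
    | zero =>
      obtain ⟨w, hw, hwS⟩ := Set.not_subset.mp hWS
      exact ⟨w, hw, hwS, trivial⟩
    | succ n ih =>
      obtain ⟨w, hw, hwS, hwn⟩ := ih
      obtain ⟨c, ⟨hcW, hcS⟩, hc⟩ := no_escape w hw hwS
      obtain ⟨γ, hγ⟩ := hW c hcW w hw
      refine ⟨_, hγ, hc γ, ?_⟩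
      rw [pow_succ', Module.End.mul_apply, D_apply]
      exact Submodule.add_mem_sup (Submodule.mul_mem_mul hcS hwn)
        (Submodule.smul_mem _ _ (Submodule.mul_mem_mul hwn hcS))
  obtain ⟨n, hn⟩ := hD
  obtain ⟨w, -, hwS, hw⟩ := mem_pow n
  exact hwS (by simp_all)

theorem isNilpotent_span_insert {C : Set B} {w : B} (hC : IsNilpotent (Submodule.span R C))
    (hw : IsNilpotent w) (h : ∀ c ∈ C, ∃ γ : R, c * w + γ • (w * c) ∈ Submodule.span R C) :
    IsNilpotent (Submodule.span R (insert w C)) := by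
  rw [Set.insert_eq, Set.union_comm, Submodule.span_union, ← Submodule.add_eq_sup]
  refine isNilpotent_add_of_mul_le hC (isNilpotent_span_singleton hw) ?_
  set S := Submodule.span R C with hS
  set T := Submodule.span R {w} with hT
  have S_le : S ≤ (1 + S + T) * S := by
    calc S = 1 * S := (one_mul S).symm
      _ ≤ (1 + S + T) * S := by gcongr; rw [add_assoc]; exact le_self_add
  have T_mul_S_le : T * S ≤ (1 + S + T) * S := by gcongr; exact le_add_self
  nth_rw 1 [hS, hT, Submodule.span_mul_span]
  rw [Submodule.span_le, Set.mul_singleton]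
  rintro _ ⟨c, hc, rfl⟩
  obtain ⟨γ, hγ⟩ := h c hc
  have hwc : w * c ∈ T * S :=
    Submodule.mul_mem_mul (Submodule.mem_span_singleton_self w) (Submodule.subset_span hc)
  exact (Submodule.add_mem_iff_left _ (Submodule.smul_mem _ γ (T_mul_S_le hwc))).mp (S_le hγ)

theorem IsWeaklyClosed.isNilpotent_span [IsNoetherian R B] {W : Set B} (hW : IsWeaklyClosed R W)
    (hn : ∀ f ∈ W, IsNilpotent f) : IsNilpotent (Submodule.span R W) := by
  obtain ⟨S, ⟨C, hCW, rfl, hS⟩, hmax⟩ := (wellFounded_gt (α := Submodule R B)).has_min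
    {S | ∃ C ⊆ W, S = Submodule.span R C ∧ IsNilpotent S}
    ⟨⊥, ∅, Set.empty_subset W, Submodule.span_empty.symm, IsNilpotent.zero⟩
  by_cases hWS : W ⊆ Submodule.span R C
  · exact isNilpotent_of_le hS (Submodule.span_le.mpr hWS)
  exfalso
  obtain ⟨w, hwW, hwS, hw⟩ := hW.exists_forall_mem hS hWS
  have hins : IsNilpotent (Submodule.span R (insert w C)) :=
    isNilpotent_span_insert hS (hn w hwW) fun c hc => hw c ⟨hCW hc, Submodule.subset_span hc⟩
  refine hmax _ ⟨insert w C, Set.insert_subset hwW hCW, rfl, hins⟩ ?_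
  refine SetLike.lt_iff_le_and_exists.mpr
    ⟨Submodule.span_mono (Set.subset_insert w C), w, ?_, hwS⟩
  exact Submodule.subset_span (Set.mem_insert w C)

end WeaklyClosed

section Trace

open Polynomial

theorem trace_aeval_X_mul_eq_zero {R M : Type*} [CommRing R] [AddCommGroup M] [Module R M]
    {f : Module.End R M} (h : ∀ k, LinearMap.trace R M (f ^ (k + 1)) = 0) (p : R[X]) :
    LinearMap.trace R M (aeval f (X * p)) = 0 := by
  induction p using Polynomial.induction_on' with
  | add p q hp hq => rw [mul_add, map_add, map_add, hp, hq, add_zero]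
  | monomial k c => rw [X_mul_monomial, aeval_monomial, ← Algebra.smul_def, map_smul, h, smul_zero]

-- Split off the power of `X` from the minimal polynomial; the projection onto the invertible part
-- of `f` is a polynomial in `f` without constant term, so its rank, being its trace, is `0`.
theorem isNilpotent_of_trace_pow_eq_zero {F V : Type*} [Field F] [CharZero F] [AddCommGroup V]
    [Module F V] [FiniteDimensional F V] {f : Module.End F V}
    (h : ∀ k, LinearMap.trace F V (f ^ (k + 1)) = 0) : IsNilpotent f := by
  obtain ⟨q, hq, hXq⟩ := exists_eq_pow_rootMultiplicity_mul_and_not_dvd (minpoly F f)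
    (minpoly.ne_zero (Algebra.IsIntegral.isIntegral f)) 0
  rw [C_0, sub_zero] at hq hXq
  set a := rootMultiplicity 0 (minpoly F f)
  have aeval_mul_eq_zero (p : F[X]) : aeval f (X ^ (a + 1) * q * p) = 0 := by
    rw [pow_succ', mul_assoc X, ← hq, mul_right_comm, map_mul, minpoly.aeval, mul_zero]
  obtain ⟨u, v, huv⟩ : IsCoprime (X ^ (a + 1)) q :=
    (((prime_X (R := F)).irreducible.coprime_iff_not_dvd).mpr hXq).pow_left
  set E := aeval f (X ^ (a + 1) * u) with hE
  have E_idem : IsIdempotentElem E := by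
    have key : X ^ (a + 1) * u - X ^ (a + 1) * u * (X ^ (a + 1) * u) =
        X ^ (a + 1) * q * (u * v) := by linear_combination (-(X ^ (a + 1) * u)) * huv
    rw [IsIdempotentElem, ← sub_eq_zero, hE, ← map_mul, ← map_sub, ← neg_sub, map_neg, key,
      aeval_mul_eq_zero, neg_zero]
  have E_eq_zero : E = 0 := LinearMap.IsIdempotentElem.eq_zero_of_trace_eq_zero E_idem <| by
    rw [hE, pow_succ', mul_assoc, trace_aeval_X_mul_eq_zero h]
  refine ⟨a + 1, ?_⟩
  have key : X ^ (a + 1) = X ^ (a + 1) * q * v + X ^ (a + 1) * u * X ^ (a + 1) := by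
    linear_combination (-X ^ (a + 1)) * huv
  simpa [aeval_mul_eq_zero, ← hE, E_eq_zero] using congrArg (aeval f) key

end Trace

section Weights

open Module.End

theorem isNilpotent_of_mapsTo_maxGenEigenspace_add {K V : Type*} [Field K] [CharZero K]
    [AddCommGroup V] [Module K V] [FiniteDimensional K V] {f T : Module.End K V}
    (hf : ⨆ μ, f.maxGenEigenspace μ = ⊤) {c : K} (hc : c ≠ 0)
    (hT : ∀ μ, Set.MapsTo T (f.maxGenEigenspace μ) (f.maxGenEigenspace (μ + c))) :
    IsNilpotent T := by
  classical
  have mapsTo_pow (j : ℕ) (μ : K) :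
      Set.MapsTo (T ^ j) (f.maxGenEigenspace μ) (f.maxGenEigenspace (μ + j * c)) := by
    induction j with
    | zero => intro x hx; simpa using hx
    | succ j ih =>
      intro x hx
      rw [pow_succ', Module.End.mul_apply, Nat.cast_succ, add_one_mul, ← add_assoc]
      exact hT _ (ih hx)
  have internal : DirectSum.IsInternal f.maxGenEigenspace :=
    DirectSum.isInternal_submodule_of_iSupIndep_of_iSup_eq_top
      f.independent_maxGenEigenspace hf
  refine isNilpotent_of_trace_pow_eq_zero fun j => ?_
  refine LinearMap.trace_eq_zero_of_mapsTo_ne internal (· + (j + 1 : ℕ) * c) (fun μ => ?_)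
    (mapsTo_pow (j + 1))
  simp [hc, Nat.cast_add_one_ne_zero]

variable {R ι W : Type*} {E : ι → Type*} [CommRing R] [Fintype ι] [DecidableEq ι]
  [∀ i, AddCommGroup (E i)] [∀ i, Module R (E i)] [AddCommGroup W] [Module R W]

theorem pow_apply_multilinear_eq_zero {M : MultilinearMap R E W}
    {g : ∀ i, Module.End R (E i)} {h : Module.End R W}
    (hM : ∀ y, h (M y) = ∑ i, M (Function.update y i (g i (y i)))) {N : ℕ} {d : ι → ℕ}
    {y : ∀ i, E i} (hy : ∀ i, (g i ^ d i) (y i) = 0) (hd : ∑ i, d i < N) :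
    (h ^ N) (M y) = 0 := by
  induction N generalizing d y with
  | zero => simp at hd
  | succ N ih =>
    rw [pow_succ, Module.End.mul_apply, hM, map_sum]
    refine Finset.sum_eq_zero fun i _ => ?_
    rcases hdi : d i with _ | k
    · have hyi : y i = 0 := by simpa [hdi] using hy i
      rw [hyi, map_zero, M.map_update_zero, map_zero]
    · refine ih (d := Function.update d i k) (fun j => ?_) ?_
      · rcases eq_or_ne j i with rfl | hji
        · simpa [hdi, pow_succ] using hy j
        · simpa [hji] using hy j
      · have hle : Function.update d i k ≤ d := update_le_self_iff.mpr (by simp [hdi])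
        have hlt : ∑ j, Function.update d i k j < ∑ j, d j :=
          Finset.sum_lt_sum (fun j _ => hle j) ⟨i, Finset.mem_univ i, by simp [hdi]⟩
        lia

theorem multilinear_mem_maxGenEigenspace_sum {M : MultilinearMap R E W}
    {g : ∀ i, Module.End R (E i)} {h : Module.End R W}
    (hM : ∀ y, h (M y) = ∑ i, M (Function.update y i (g i (y i)))) {c : ι → R}
    {y : ∀ i, E i} (hy : ∀ i, y i ∈ (g i).maxGenEigenspace (c i)) :
    M y ∈ h.maxGenEigenspace (∑ i, c i) := by
  simp only [mem_maxGenEigenspace] at hy ⊢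
  choose d hd using hy
  refine ⟨_, pow_apply_multilinear_eq_zero (g := fun i => g i - c i • 1) (fun z => ?_) hd
    (Nat.lt_succ_self _)⟩
  simp [hM, M.map_update_sub, M.map_update_smul, Finset.sum_sub_distrib, Finset.sum_smul]

end Weights

section LeftNormed

theorem lnProd_ofFn_succ {A : Type*} [Mul A] [Zero A] {n : ℕ} (x : Fin (n + 2) → A) :
    lnProd (List.ofFn x) = lnProd (List.ofFn (Fin.init x)) * x (Fin.last (n + 1)) := by
  have key : ∀ l : List A, l ≠ [] → ∀ a, lnProd (l ++ [a]) = lnProd l * a := by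
    rintro (_ | ⟨b, l⟩) hl a
    · exact absurd rfl hl
    · simp [lnProd]
  rw [List.ofFn_succ', List.concat_eq_append, key _ (by simp)]
  rfl

theorem isProd_lnProd_ofFn {A : Type*} [Mul A] [Zero A] {n : ℕ} (x : Fin (n + 1) → A) :
    IsProd (n + 1) (lnProd (List.ofFn x)) := by
  induction n with
  | zero => exact IsProd.single _
  | succ n ih =>
    rw [lnProd_ofFn_succ]
    exact (ih _).mul (IsProd.single _)

open scoped TensorProduct in
theorem lnProd_ofFn_one_tmul {R A : Type*} [CommSemiring R] [NonUnitalNonAssocSemiring A]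
    [Module R A] [SMulCommClass R A A] [IsScalarTower R A A] (S : Type*) [CommSemiring S]
    [Algebra R S] {n : ℕ} (x : Fin n → A) :
    lnProd (List.ofFn ((fun a => (1 : S) ⊗ₜ[R] a) ∘ x)) = 1 ⊗ₜ lnProd (List.ofFn x) := by
  rw [← List.map_ofFn]
  rcases List.ofFn x with _ | ⟨a, l⟩
  · exact (TensorProduct.tmul_zero A 1).symm
  · rw [lnProd, List.map_cons, lnProd, List.foldl_map]
    exact List.foldl_hom _ (by simp)

end LeftNormed

section Operators

variable (F A : Type*) [CommSemiring F] [NonUnitalNonAssocSemiring A] [Module F A]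
  [SMulCommClass F A A] [IsScalarTower F A A]

/-- The left multiplications of an algebra, `leftMul F A x y = x * y`, as a linear family of
endomorphisms. -/
def leftMul : A →ₗ[F] Module.End F A := LinearMap.mul F A

/-- The right multiplications of an algebra, `rightMul F A x y = y * x`, as a linear family of
endomorphisms. -/
def rightMul : A →ₗ[F] Module.End F A := (LinearMap.mul F A).flip

variable {F A}

@[simp]
theorem leftMul_apply (x y : A) : leftMul F A x y = x * y := rfl

@[simp]
theorem rightMul_apply (x y : A) : rightMul F A x y = y * x := rfl

theorem lnProd_ofFn_cons_const (z x : A) (k : ℕ) :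
    lnProd (List.ofFn (Fin.cons z fun _ : Fin k => x : Fin (k + 1) → A)) =
      (rightMul F A x ^ k) z := by
  induction k with
  | zero => rfl
  | succ k ih =>
    rw [lnProd_ofFn_succ, pow_succ', Module.End.mul_apply, ← ih, rightMul_apply, ← Fin.succ_last,
      Fin.cons_succ]
    congr 3
    ext i
    refine Fin.cases ?_ (fun j => ?_) i <;> rfl

variable (F A)

/-- The left-normed product of `n + 1` factors as a multilinear map. -/
def lnProdMultilinear : (n : ℕ) → MultilinearMap F (fun _ : Fin (n + 1) => A) A
  | 0 => MultilinearMap.ofSubsingleton F A A (0 : Fin 1) LinearMap.id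
  | n + 1 => ((LinearMap.mul F A).compMultilinearMap (lnProdMultilinear n)).uncurryRight

variable {F A}

@[simp]
theorem lnProdMultilinear_apply {n : ℕ} (x : Fin (n + 1) → A) :
    lnProdMultilinear F A n x = lnProd (List.ofFn x) := by
  induction n with
  | zero => rfl
  | succ n ih =>
    rw [lnProd_ofFn_succ, ← ih]
    rfl

end Operators

section LeibnizDerivation

open Module.End
open scoped TensorProduct

variable {F A : Type*} [Field F] [NonUnitalNonAssocRing A] [Module F A]
  [SMulCommClass F A A] [IsScalarTower F A A]

theorem isLeibnizDer_of_basis {ι : Type*} (b : Module.Basis ι F A) {n : ℕ} {φ : A →ₗ[F] A}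
    (h : ∀ v : Fin (n + 1) → ι, φ (lnProd (List.ofFn (b ∘ v))) =
      ∑ i, lnProd (List.ofFn (Function.update (b ∘ v) i (φ (b (v i)))))) :
    IsLeibnizDer (n + 1) φ := by
  have update_apply (x : Fin (n + 1) → A) (i : Fin (n + 1)) :
      (fun j => Function.update (fun _ => LinearMap.id) i φ j (x j)) =
        Function.update x i (φ (x i)) := by
    ext j
    rcases eq_or_ne j i with rfl | hji <;> simp [*]
  have key : φ.compMultilinearMap (lnProdMultilinear F A n) =
      ∑ i, (lnProdMultilinear F A n).compLinearMap
        (Function.update (fun _ => LinearMap.id) i φ) :=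
    Module.Basis.ext_multilinear (fun _ => b) fun v => by
      simpa [-List.ofFn_succ, update_apply, Function.comp_def] using h v
  intro x
  simpa [-List.ofFn_succ, update_apply] using congrArg (· x) key

theorem IsLeibnizDer.baseChange (K : Type*) [Field K] [Algebra F K] {n : ℕ} {φ : A →ₗ[F] A}
    (hφ : IsLeibnizDer (n + 1) φ) : IsLeibnizDer (n + 1) (φ.baseChange K) := by
  let b := Module.Basis.ofVectorSpace F A
  refine isLeibnizDer_of_basis (Algebra.TensorProduct.basis K b) fun v => ?_
  have basis_comp : Algebra.TensorProduct.basis K b ∘ v = (fun a => 1 ⊗ₜ a) ∘ (b ∘ v) := by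
    ext; simp
  have baseChange_basis (i : Fin (n + 1)) :
      φ.baseChange K (Algebra.TensorProduct.basis K b (v i)) = 1 ⊗ₜ φ (b (v i)) := by simp
  simp only [basis_comp, baseChange_basis, ← Function.comp_update, lnProd_ofFn_one_tmul,
    LinearMap.baseChange_tmul, hφ (b ∘ v), TensorProduct.tmul_sum, Function.comp_apply]

theorem IsLeibnizDer.rightMul_pow_mapsTo_maxGenEigenspace {k : ℕ} {φ : Module.End F A}
    (hφ : IsLeibnizDer (k + 1) φ) {c : F} {x : A} (hx : x ∈ φ.maxGenEigenspace c) (μ : F) :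
    Set.MapsTo (rightMul F A x ^ k) (φ.maxGenEigenspace μ) (φ.maxGenEigenspace (μ + k * c)) := by
  intro z hz
  have key := multilinear_mem_maxGenEigenspace_sum (M := lnProdMultilinear F A k)
    (g := fun _ => φ) (h := φ) (c := Fin.cons μ fun _ => c) (y := Fin.cons z fun _ => x)
    (fun y => by simpa using hφ y) (Fin.cases hz fun _ => hx)
  rw [lnProdMultilinear_apply, lnProd_ofFn_cons_const (F := F)] at key
  simpa [Fin.sum_univ_succ] using key

variable [CharZero F] [FiniteDimensional F A] {k : ℕ} {φ : Module.End F A}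

theorem IsLeibnizDer.isNilpotent_rightMul (hφ : IsLeibnizDer (k + 2) φ)
    (htop : ⨆ μ, φ.maxGenEigenspace μ = ⊤) {c : F} (hc : c ≠ 0) {x : A}
    (hx : x ∈ φ.maxGenEigenspace c) : IsNilpotent (rightMul F A x) := by
  have weight_ne_zero : (k + 1 : ℕ) * c ≠ 0 := mul_ne_zero (Nat.cast_ne_zero.mpr k.succ_ne_zero) hc
  exact (isNilpotent_of_mapsTo_maxGenEigenspace_add htop weight_ne_zero fun μ =>
    hφ.rightMul_pow_mapsTo_maxGenEigenspace hx μ).of_pow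

theorem IsLeibnizDer.trace_rightMul_eq_zero_of_iSup_maxGenEigenspace_eq_top
    (hφ : IsLeibnizDer (k + 2) φ) (hinj : Function.Injective φ)
    (htop : ⨆ μ, φ.maxGenEigenspace μ = ⊤) (x : A) :
    LinearMap.trace F A (rightMul F A x) = 0 := by
  have hx : x ∈ ⨆ μ, φ.maxGenEigenspace μ := htop ▸ Submodule.mem_top
  induction hx using Submodule.iSup_induction' with
  | zero => simp
  | add x y _ _ hx hy => simp [hx, hy]
  | mem c x hx =>
    rcases eq_or_ne c 0 with rfl | hc
    · obtain ⟨n, hn⟩ := (mem_maxGenEigenspace φ 0 x).mp hx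
      have pow_inj : Function.Injective (φ ^ n) := by
        rw [Module.End.coe_pow]
        exact hinj.iterate n
      rw [zero_smul, sub_zero] at hn
      rw [(map_eq_zero_iff _ pow_inj).mp hn, map_zero, map_zero]
    · have rightMul_nilpotent := hφ.isNilpotent_rightMul htop hc hx
      exact (LinearMap.isNilpotent_trace_of_isNilpotent rightMul_nilpotent).eq_zero

theorem IsLeibnizDer.trace_rightMul_eq_zero (hφ : IsLeibnizDer (k + 2) φ)
    (hinj : Function.Injective φ) (x : A) : LinearMap.trace F A (rightMul F A x) = 0 := by
  let K := AlgebraicClosure F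
  have rightMul_tmul : rightMul K (K ⊗[F] A) (1 ⊗ₜ x) = (rightMul F A x).baseChange K := by
    ext; simp
  have trace_eq_zero := (hφ.baseChange K).trace_rightMul_eq_zero_of_iSup_maxGenEigenspace_eq_top
    (Module.Flat.lTensor_preserves_injective_linearMap φ hinj) (iSup_maxGenEigenspace_eq_top _)
    (1 ⊗ₜ x)
  rw [rightMul_tmul, LinearMap.trace_baseChange] at trace_eq_zero
  exact (algebraMap F K).injective (by simpa using trace_eq_zero)

end LeibnizDerivation

section Alternative

/-- Left alternativity of a product: `(x * x) * y = x * (x * y)`. Alternative algebras are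
those that are both left and right alternative. -/
def IsLeftAlternative (A : Type*) [Mul A] : Prop := ∀ x y : A, (x * x) * y = x * (x * y)

/-- Right alternativity of a product: `(x * y) * y = x * (y * y)`. -/
def IsRightAlternative (A : Type*) [Mul A] : Prop := ∀ x y : A, (x * y) * y = x * (y * y)

section SquarePreserving

theorem map_mul_add_map_mul_of_map_mul_self {A B G : Type*} [NonUnitalNonAssocRing A]
    [NonUnitalNonAssocRing B] [FunLike G A B] [AddMonoidHomClass G A B] {ρ : G}
    (hρ : ∀ x, ρ (x * x) = ρ x * ρ x) (x y : A) :
    ρ (x * y) + ρ (y * x) = ρ x * ρ y + ρ y * ρ x := by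
  have h := hρ (x + y)
  simp only [add_mul, mul_add, map_add, hρ] at h
  rw [← sub_eq_zero] at h ⊢
  rw [← h]
  abel

variable {R A B : Type*} [CommRing R] [NonUnitalNonAssocRing A] [Module R A] [Ring B] [Algebra R B]
  {ρ : A →ₗ[R] B}

theorem isWeaklyClosed_range_of_map_mul_self (hρ : ∀ x, ρ (x * x) = ρ x * ρ x) :
    IsWeaklyClosed R (Set.range ρ) := by
  rintro _ ⟨x, rfl⟩ _ ⟨y, rfl⟩
  exact ⟨1, x * y + y * x, by rw [map_add, one_smul, map_mul_add_map_mul_of_map_mul_self hρ]⟩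

theorem isNilpotent_range_of_map_mul_self [IsNoetherian R B]
    (hρ : ∀ x, ρ (x * x) = ρ x * ρ x) (hnil : ∀ x, IsNilpotent (ρ x)) :
    IsNilpotent (LinearMap.range ρ) := by
  have h := (isWeaklyClosed_range_of_map_mul_self hρ).isNilpotent_span (by simpa using hnil)
  rwa [← LinearMap.coe_range, Submodule.span_eq] at h

end SquarePreserving

variable {R A : Type*} [CommRing R] [NonUnitalNonAssocRing A] [Module R A] [SMulCommClass R A A]
  [IsScalarTower R A A]

theorem IsLeftAlternative.leftMul_mul_self (hl : IsLeftAlternative A) (x : A) :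
    leftMul R A (x * x) = leftMul R A x * leftMul R A x :=
  LinearMap.ext fun y => hl x y

theorem IsRightAlternative.rightMul_mul_self (hr : IsRightAlternative A) (x : A) :
    rightMul R A (x * x) = rightMul R A x * rightMul R A x :=
  LinearMap.ext fun y => (hr y x).symm

theorem IsRightAlternative.leftMul_mul_rightMul (hr : IsRightAlternative A) (x y : A) :
    leftMul R A x * rightMul R A y =
      rightMul R A y * leftMul R A x + leftMul R A (x * y) - leftMul R A x * leftMul R A y := by
  ext z
  have h := LinearMap.congr_fun
    (map_mul_add_map_mul_of_map_mul_self (hr.rightMul_mul_self (R := R)) z y) x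
  simpa [eq_sub_iff_add_eq, add_comm] using h

theorem commute_leftMul_rightMul (hl : IsLeftAlternative A) (hr : IsRightAlternative A) (x : A) :
    Commute (leftMul R A x) (rightMul R A x) := by
  ext y
  have h := LinearMap.congr_fun
    (map_mul_add_map_mul_of_map_mul_self (hl.leftMul_mul_self (R := R)) x y) x
  simpa [hr y x] using h.symm

theorem mul_rightMul_pow_self (hl : IsLeftAlternative A) (hr : IsRightAlternative A) (x : A)
    (m : ℕ) : x * (rightMul R A x ^ m) x = (rightMul R A x ^ m) x * x :=
  calc x * (rightMul R A x ^ m) x = (rightMul R A x ^ m) (x * x) :=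
        LinearMap.congr_fun ((commute_leftMul_rightMul hl hr x).pow_right m) x
    _ = (rightMul R A x ^ m) x * x :=
        LinearMap.congr_fun ((Commute.refl (rightMul R A x)).pow_left m) x

theorem map_rightMul_pow_self (h2 : IsUnit (2 : R)) {B : Type*} [Ring B] [Module R B]
    {ρ : A →ₗ[R] B} (hl : IsLeftAlternative A) (hr : IsRightAlternative A)
    (hρ : ∀ x, ρ (x * x) = ρ x * ρ x) (x : A) (m : ℕ) :
    ρ ((rightMul R A x ^ m) x) = ρ x ^ (m + 1) := by
  induction m with
  | zero => simp
  | succ m ih =>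
    have h := map_mul_add_map_mul_of_map_mul_self hρ ((rightMul R A x ^ m) x) x
    rw [mul_rightMul_pow_self hl hr, ih, ← pow_succ, ← pow_succ', ← two_smul R, ← two_smul R] at h
    rw [pow_succ', Module.End.mul_apply, rightMul_apply]
    exact h2.smul_left_cancel.mp h

theorem isNilpotent_rightMul_of_trace_eq_zero {F A : Type*} [Field F] [CharZero F]
    [NonUnitalNonAssocRing A] [Module F A] [SMulCommClass F A A] [IsScalarTower F A A]
    [FiniteDimensional F A] (hl : IsLeftAlternative A) (hr : IsRightAlternative A)
    (h : ∀ x, LinearMap.trace F A (rightMul F A x) = 0) (x : A) : IsNilpotent (rightMul F A x) :=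
  isNilpotent_of_trace_pow_eq_zero fun m => by
    rw [← map_rightMul_pow_self two_ne_zero.isUnit hl hr hr.rightMul_mul_self, h]

theorem isNilpotent_leftMul_of_isNilpotent_rightMul (h2 : IsUnit (2 : R))
    (hl : IsLeftAlternative A) (hr : IsRightAlternative A) {x : A}
    (h : IsNilpotent (rightMul R A x)) : IsNilpotent (leftMul R A x) := by
  obtain ⟨m, hm⟩ := h
  exact ⟨m + 1, by rw [← map_rightMul_pow_self h2 hl hr hl.leftMul_mul_self, hm]; simp⟩

theorem isNilpotent_range_leftMul_add_range_rightMul [IsNoetherian R (Module.End R A)]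
    (hl : IsLeftAlternative A) (hr : IsRightAlternative A)
    (hL : ∀ x, IsNilpotent (leftMul R A x)) (hR : ∀ x, IsNilpotent (rightMul R A x)) :
    IsNilpotent (LinearMap.range (leftMul R A) + LinearMap.range (rightMul R A)) := by
  refine isNilpotent_add_of_mul_le (isNilpotent_range_of_map_mul_self hl.leftMul_mul_self hL)
    (isNilpotent_range_of_map_mul_self hr.rightMul_mul_self hR) ?_
  set S := LinearMap.range (leftMul R A)
  set T := LinearMap.range (rightMul R A)
  have add_mul_eq : (1 + S + T) * S = S + S * S + T * S := by simp only [add_mul, one_mul]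
  rw [add_mul_eq, Submodule.mul_le]
  rintro _ ⟨x, rfl⟩ _ ⟨y, rfl⟩
  have hL_mem (a : A) : leftMul R A a ∈ S := ⟨a, rfl⟩
  rw [hr.leftMul_mul_rightMul, add_comm (rightMul R A y * _), add_sub_right_comm]
  refine Submodule.add_mem_sup (sub_mem ?_ ?_)
    (Submodule.mul_mem_mul ⟨y, rfl⟩ (hL_mem x))
  · exact Submodule.mem_sup_left (hL_mem (x * y))
  · exact Submodule.mem_sup_right (Submodule.mul_mem_mul (hL_mem x) (hL_mem y))

end Alternative

section Nilpotent

variable {R A : Type*} [CommSemiring R] [NonUnitalNonAssocSemiring A] [Module R A]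
  [SMulCommClass R A A] [IsScalarTower R A A]

theorem IsProd.exists_apply_eq {M : Submodule R (Module.End R A)}
    (hL : LinearMap.range (leftMul R A) ≤ M) (hR : LinearMap.range (rightMul R A) ≤ M)
    {n k : ℕ} {x : A} (hx : IsProd n x) (hk : 2 ^ k ≤ n) : ∃ f ∈ M ^ k, ∃ y, f y = x := by
  induction k generalizing n x with
  | zero => exact ⟨1, Submodule.one_le.mp (pow_zero M).ge, x, rfl⟩
  | succ k ih =>
    have h2k : 1 ≤ 2 ^ k := Nat.one_le_two_pow
    rw [pow_succ] at hk
    rw [pow_succ']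
    cases hx with
    | single => lia
    | @mul a b u v hu hv =>
      by_cases hka : 2 ^ k ≤ a
      · obtain ⟨f, hf, y, rfl⟩ := ih hu hka
        exact ⟨_, Submodule.mul_mem_mul (hR ⟨v, rfl⟩) hf, y, rfl⟩
      · obtain ⟨f, hf, y, rfl⟩ := ih hv (by lia)
        exact ⟨_, Submodule.mul_mem_mul (hL ⟨u, rfl⟩) hf, y, rfl⟩

theorem exists_forall_isProd_eq_zero_of_isNilpotent
    (h : IsNilpotent (LinearMap.range (leftMul R A) + LinearMap.range (rightMul R A))) :
    ∃ n, 1 ≤ n ∧ ∀ x : A, IsProd n x → x = 0 := by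
  obtain ⟨N, hN⟩ := h
  refine ⟨2 ^ N, Nat.one_le_two_pow, fun x hx => ?_⟩
  obtain ⟨f, hf, y, rfl⟩ := hx.exists_apply_eq (R := R) le_sup_left le_sup_right le_rfl
  rw [← Submodule.add_eq_sup, hN] at hf
  rw [(Submodule.mem_bot R).mp hf, LinearMap.zero_apply]

theorem isLeibnizDer_of_forall_isProd_eq_zero {F A : Type*} [Field F]
    [NonUnitalNonAssocRing A] [Module F A] {n : ℕ}
    (h : ∀ x : A, IsProd (n + 1) x → x = 0) (φ : A →ₗ[F] A) : IsLeibnizDer (n + 2) φ := by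
  have lnProd_eq_zero (x : Fin (n + 2) → A) : lnProd (List.ofFn x) = 0 := by
    rw [lnProd_ofFn_succ, h _ (isProd_lnProd_ofFn _), zero_mul]
  intro x
  simp [-List.ofFn_succ, lnProd_eq_zero]

end Nilpotent

/-- A finite-dimensional alternative algebra over a field of characteristic zero is
nilpotent iff it admits an invertible Leibniz-derivation of some order `n ≥ 2`. -/
theorem alternative_nilpotent_iff_invertible_leibniz_derivation
    {F A : Type*} [Field F] [CharZero F]
    [NonUnitalNonAssocRing A] [Module F A] [SMulCommClass F A A] [IsScalarTower F A A]
    [FiniteDimensional F A]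
    (alt1 : ∀ x y : A, (x * x) * y = x * (x * y))
    (alt2 : ∀ x y : A, (x * y) * y = x * (y * y)) :
    (∃ n : ℕ, 1 ≤ n ∧ ∀ x : A, IsProd n x → x = 0) ↔
      (∃ n : ℕ, 2 ≤ n ∧ ∃ φ : A →ₗ[F] A, Function.Bijective φ ∧ IsLeibnizDer n φ) := by
  constructor
  · rintro ⟨n, hn, h⟩
    obtain ⟨m, rfl⟩ := Nat.exists_eq_add_of_le' hn
    exact ⟨m + 2, Nat.le_add_left 2 m, LinearMap.id, Function.bijective_id,
      isLeibnizDer_of_forall_isProd_eq_zero h _⟩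
  · rintro ⟨n, hn, φ, hφ_bij, hφ⟩
    obtain ⟨k, rfl⟩ := Nat.exists_eq_add_of_le' hn
    have rightMul_nilpotent : ∀ x, IsNilpotent (rightMul F A x) :=
      isNilpotent_rightMul_of_trace_eq_zero alt1 alt2 (hφ.trace_rightMul_eq_zero hφ_bij.injective)
    have leftMul_nilpotent : ∀ x, IsNilpotent (leftMul F A x) := fun x =>
      isNilpotent_leftMul_of_isNilpotent_rightMul two_ne_zero.isUnit alt1 alt2
        (rightMul_nilpotent x)
    exact exists_forall_isProd_eq_zero_of_isNilpotent
      (isNilpotent_range_leftMul_add_range_rightMul alt1 alt2 leftMul_nilpotent rightMul_nilpotent)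
end

section
/- Let F be a field of characteristic 3. Then there exists a 7-dimensional nilpotent alternative F-algebra A such that every derivation D of A is singular, i.e., there exists x ≠ 0 in A with D(x) = 0. (Such an algebra is given by the basis {e₁, e₂, e₃, u₁, u₂, v, w} with nonzero products e₁² = u₁, e₂² = u₂, e₂e₃ = e₃e₂ = −v, e₃e₁ = u₂, e₁e₃ = u₂, e₁u₁ = u₁e₁ = v, e₂u₂ = u₂e₂ = w, e₁v = ve₁ = u₁² = w.) -/
/-- `IsProdM mul n a` : `a` is a product (with respect to the multiplication `mul`) of
`n` elements under some distribution of parentheses. -/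
inductive IsProdM {A : Type*} (mul : A → A → A) : ℕ → A → Prop
  | single (a : A) : IsProdM mul 1 a
  | mul {m n : ℕ} {x y : A} :
      IsProdM mul m x → IsProdM mul n y → IsProdM mul (m + n) (mul x y)

/-!
Let `D` be a derivation of a commutative alternative algebra of characteristic `3`. Then
`D (x ^ 3) = 3 x ^ 2 D x = 0`, so it is enough to find a nilpotent such algebra of dimension `7`
in which some cube is nonzero. In the algebra with basis `e₁, e₂, e₃, u₁, u₂, v, w` used here the
cube of `e₂` is `w`; giving the basis the weights `3, 4, 5, 6, 8, 9, 12` makes it a graded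
algebra, so a product of five elements has weight at least `15` and vanishes.
-/

lemma IsProdM.mem_of_filtration {A : Type*} {mul : A → A → A} {S : ℕ → Set A}
    (mem_one : ∀ a, a ∈ S 1)
    (mul_mem : ∀ {m n a b}, a ∈ S m → b ∈ S n → mul a b ∈ S (m + n))
    {n : ℕ} {a : A} (h : IsProdM mul n a) : a ∈ S n := by
  induction h with
  | single a => exact mem_one a
  | mul _ _ hx hy => exact mul_mem hx hy

section CommutativeAlternative

variable {R M : Type*} [CommSemiring R] [AddCommMonoid M] [Module R M]

lemma right_alternative_of_comm_of_left_alternative {A : Type*} {mul : A → A → A}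
    (comm : ∀ x y, mul x y = mul y x)
    (left_alt : ∀ x y, mul (mul x x) y = mul x (mul x y)) (x y : A) :
    mul (mul x y) y = mul x (mul y y) :=
  calc mul (mul x y) y = mul y (mul y x) := by rw [comm _ y, comm x y]
    _ = mul (mul y y) x := (left_alt y x).symm
    _ = mul x (mul y y) := comm _ _

lemma leibniz_cube {m : M →ₗ[R] M →ₗ[R] M}
    (comm : ∀ x y, m x y = m y x) (left_alt : ∀ x y, m (m x x) y = m x (m x y))
    {D : M → M} (leibniz : ∀ x y, D (m x y) = m (D x) y + m x (D y)) (x : M) :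
    D (m x (m x x)) = (3 : R) • m (m x x) (D x) := by
  have leibniz_sq : D (m x x) = m x (D x) + m x (D x) := by rw [leibniz, comm (D x)]
  rw [leibniz, leibniz_sq, map_add, ← left_alt, comm (D x)]
  module

lemma leibniz_cube_eq_zero [CharP R 3] {m : M →ₗ[R] M →ₗ[R] M}
    (comm : ∀ x y, m x y = m y x) (left_alt : ∀ x y, m (m x x) y = m x (m x y))
    {D : M → M} (leibniz : ∀ x y, D (m x y) = m (D x) y + m x (D y)) (x : M) :
    D (m x (m x x)) = 0 := by
  have three_eq_zero : (3 : R) = 0 := CharP.ofNat_eq_zero R 3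
  rw [leibniz_cube comm left_alt leibniz, three_eq_zero, zero_smul]

end CommutativeAlternative

section WeightFiltration

variable {ι : Type*} (R : Type*) [Semiring R]

/-- The vectors in `R ^ ι` all of whose components have weight at least `d`, when the `i`-th
basis vector is given the weight `wt i`. -/
def weightFiltration (wt : ι → ℕ) (d : ℕ) : Submodule R (ι → R) :=
  Submodule.pi {i | wt i < d} fun _ ↦ ⊥

variable {R} {wt : ι → ℕ}

lemma mem_weightFiltration {d : ℕ} {x : ι → R} :
    x ∈ weightFiltration R wt d ↔ ∀ i, wt i < d → x i = 0 := by
  simp [weightFiltration, Submodule.mem_pi]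

lemma mul_eq_zero_of_mem_weightFiltration {s t : ℕ} {x y : ι → R}
    (hx : x ∈ weightFiltration R wt s) (hy : y ∈ weightFiltration R wt t) {j k : ι}
    (h : wt j + wt k < s + t) : x j * y k = 0 := by
  rw [mem_weightFiltration] at hx hy
  obtain hj | hk : wt j < s ∨ wt k < t := by lia
  · rw [hx j hj, zero_mul]
  · rw [hy k hk, mul_zero]

end WeightFiltration

section SevenDim

variable {R : Type*} [CommRing R]

variable (R) in
/-- The multiplication of the algebra with basis `e₁, e₂, e₃, u₁, u₂, v, w` (coordinates `0` to
`6`, in this order) in which `e₁² = u₁`, `e₂² = e₁e₃ = e₃e₁ = u₂`, `e₂e₃ = e₃e₂ = -v`,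
`e₁u₁ = u₁e₁ = v`, `e₂u₂ = u₂e₂ = e₁v = ve₁ = u₁² = w` and all other products of basis vectors
vanish. -/
def sevenDimMul : (Fin 7 → R) →ₗ[R] (Fin 7 → R) →ₗ[R] (Fin 7 → R) :=
  LinearMap.mk₂ R
    (fun x y ↦ ![0, 0, 0,
      x 0 * y 0,
      x 1 * y 1 + x 0 * y 2 + x 2 * y 0,
      x 0 * y 3 + x 3 * y 0 - x 1 * y 2 - x 2 * y 1,
      x 1 * y 4 + x 4 * y 1 + x 0 * y 5 + x 5 * y 0 + x 3 * y 3])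
    (by intro x x' y; ext i; fin_cases i <;> simp <;> ring)
    (by intro c x y; ext i; fin_cases i <;> simp <;> ring)
    (by intro x y y'; ext i; fin_cases i <;> simp <;> ring)
    (by intro c x y; ext i; fin_cases i <;> simp <;> ring)

lemma sevenDimMul_apply (x y : Fin 7 → R) :
    sevenDimMul R x y = ![0, 0, 0,
      x 0 * y 0,
      x 1 * y 1 + x 0 * y 2 + x 2 * y 0,
      x 0 * y 3 + x 3 * y 0 - x 1 * y 2 - x 2 * y 1,
      x 1 * y 4 + x 4 * y 1 + x 0 * y 5 + x 5 * y 0 + x 3 * y 3] :=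
  rfl

lemma sevenDimMul_comm (x y : Fin 7 → R) : sevenDimMul R x y = sevenDimMul R y x := by
  ext i
  fin_cases i <;> simp [sevenDimMul_apply] <;> ring

lemma sevenDimMul_left_associator (x y : Fin 7 → R) :
    sevenDimMul R (sevenDimMul R x x) y - sevenDimMul R x (sevenDimMul R x y) =
      Pi.single 6 (3 * (x 2 * (x 0 * y 1 - x 1 * y 0))) := by
  ext i
  fin_cases i <;> simp [sevenDimMul_apply] <;> ring

lemma sevenDimMul_left_alternative [CharP R 3] (x y : Fin 7 → R) :
    sevenDimMul R (sevenDimMul R x x) y = sevenDimMul R x (sevenDimMul R x y) := by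
  have three_eq_zero : (3 : R) = 0 := CharP.ofNat_eq_zero R 3
  rw [← sub_eq_zero, sevenDimMul_left_associator, three_eq_zero, zero_mul, Pi.single_zero]

lemma sevenDimMul_cube_e₂ :
    sevenDimMul R (Pi.single 1 1) (sevenDimMul R (Pi.single 1 1) (Pi.single 1 1)) =
      Pi.single 6 1 := by
  ext i
  fin_cases i <;> simp [sevenDimMul_apply]

/-- The weights of `e₁, e₂, e₃, u₁, u₂, v, w` for which `sevenDimMul` is graded; up to scaling,
they are the only ones. -/
def sevenDimWeight : Fin 7 → ℕ := ![3, 4, 5, 6, 8, 9, 12]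

lemma sevenDimMul_mem_weightFiltration {s t : ℕ} {x y : Fin 7 → R}
    (hx : x ∈ weightFiltration R sevenDimWeight s)
    (hy : y ∈ weightFiltration R sevenDimWeight t) :
    sevenDimMul R x y ∈ weightFiltration R sevenDimWeight (s + t) := by
  refine mem_weightFiltration.2 fun i hi ↦ ?_
  have monomial_eq_zero (j k : Fin 7)
      (h : sevenDimWeight j + sevenDimWeight k = sevenDimWeight i) : x j * y k = 0 :=
    mul_eq_zero_of_mem_weightFiltration hx hy (h ▸ hi)
  fin_cases i <;> simp (disch := decide) [sevenDimMul_apply, monomial_eq_zero]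

lemma eq_zero_of_isProdM_five {x : Fin 7 → R}
    (h : IsProdM (fun a b ↦ sevenDimMul R a b) 5 x) : x = 0 := by
  have weight_bounds (i : Fin 7) : 3 ≤ sevenDimWeight i ∧ sevenDimWeight i < 15 := by
    fin_cases i <;> simp [sevenDimWeight]
  have mem_fifteen : x ∈ weightFiltration R sevenDimWeight (3 * 5) := by
    refine h.mem_of_filtration (S := fun n ↦ weightFiltration R sevenDimWeight (3 * n))
      (fun a ↦ ?_) (fun ha hb ↦ ?_)
    · exact mem_weightFiltration.2 fun i hi ↦ absurd hi (weight_bounds i).1.not_gt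
    · simpa only [mul_add, SetLike.mem_coe] using sevenDimMul_mem_weightFiltration ha hb
  exact funext fun i ↦ mem_weightFiltration.1 mem_fifteen i (weight_bounds i).2

end SevenDim

theorem exists_nilpotent_alternative_with_singular_derivations_general
    (R : Type*) [CommRing R] [CharP R 3] :
    ∃ m : (Fin 7 → R) →ₗ[R] (Fin 7 → R) →ₗ[R] (Fin 7 → R),
      (∀ x y, m x y = m y x) ∧
      (∀ x y, m (m x x) y = m x (m x y)) ∧
      (∀ x y, m (m x y) y = m x (m y y)) ∧
      (∃ n : ℕ, 1 ≤ n ∧ ∀ x, IsProdM (fun a b ↦ m a b) n x → x = 0) ∧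
      ∃ x ≠ 0, ∀ D : (Fin 7 → R) →ₗ[R] (Fin 7 → R),
        (∀ x y, D (m x y) = m (D x) y + m x (D y)) → D x = 0 := by
  have : Nontrivial R := CharP.nontrivial_of_char_ne_one (R := R) (v := 3) (by norm_num)
  refine ⟨sevenDimMul R, sevenDimMul_comm, sevenDimMul_left_alternative,
    right_alternative_of_comm_of_left_alternative sevenDimMul_comm sevenDimMul_left_alternative,
    ⟨5, by norm_num, fun _ ↦ eq_zero_of_isProdM_five⟩,
    Pi.single 6 1, Pi.single_ne_zero_iff.2 one_ne_zero, fun D leibniz ↦ ?_⟩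
  rw [← sevenDimMul_cube_e₂]
  exact leibniz_cube_eq_zero sevenDimMul_comm sevenDimMul_left_alternative leibniz _

/-- Over any field of characteristic 3 there exists a 7-dimensional nilpotent alternative
algebra (a bilinear multiplication on `F⁷`) all of whose derivations are singular. -/
theorem exists_nilpotent_alternative_with_singular_derivations
    (F : Type*) [Field F] [CharP F 3] :
    ∃ m : (Fin 7 → F) →ₗ[F] (Fin 7 → F) →ₗ[F] (Fin 7 → F),
      (∀ x y : Fin 7 → F, m (m x x) y = m x (m x y)) ∧
      (∀ x y : Fin 7 → F, m (m x y) y = m x (m y y)) ∧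
      (∃ n : ℕ, 1 ≤ n ∧ ∀ x : Fin 7 → F, IsProdM (fun a b => m a b) n x → x = 0) ∧
      (∀ D : (Fin 7 → F) →ₗ[F] (Fin 7 → F),
        (∀ x y : Fin 7 → F, D (m x y) = m (D x) y + m x (D y)) →
        ∃ x : Fin 7 → F, x ≠ 0 ∧ D x = 0) := by
  obtain ⟨m, -, left_alt, right_alt, nil, x, hx, hD⟩ :=
    exists_nilpotent_alternative_with_singular_derivations_general F
  exact ⟨m, left_alt, right_alt, nil, fun D leibniz ↦ ⟨x, hx, hD D leibniz⟩⟩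
end

section
/- Let J be a finite-dimensional Jordan algebra over a field of characteristic zero admitting an invertible (bijective) derivation. Then J is nilpotent. -/
/-!
Let `V` be the sum of the adjoint module `Der J ⊕ J` and of `J ⊗ K²`. On `V` the elements of `J` act
by odd operators that form a Lie triple system, and the trace of a product of two such operators
is a sum of traces of multiplication operators `L_a`. These vanish: a surjective derivation `d`
makes every `L_a` a commutator `⁅d, L_b⁆`. Hence the trace form of `V` vanishes on the Lie algebra
generated by `J`, and it still vanishes once `d` is adjoined, provided that `tr d²` is cancelled on
an auxiliary plane. By Cartan's criterion the derived algebra then acts nilpotently. It contains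
`⁅d, J⁆ = J`, so the operators `L_a` generate a nilpotent associative algebra.
-/

open Module LieAlgebra

attribute [local instance 100] LieRing.ofAssociativeRing
attribute [local instance] LieAlgebra.ofAssociativeAlgebra

section NilpotentSubspaces

variable {K V W : Type*} [CommRing K] [AddCommGroup V] [Module K V] [AddCommGroup W] [Module K W]

theorem exists_mem_pow_intertwining {S : Submodule K (End K V)} {T : Submodule K (End K W)}
    {π : V →ₗ[K] W} (h : ∀ t ∈ T, ∃ s ∈ S, π ∘ₗ s = t ∘ₗ π) (n : ℕ) :
    ∀ t ∈ T ^ n, ∃ s ∈ S ^ n, π ∘ₗ s = t ∘ₗ π := by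
  induction n with
  | zero =>
    simp only [pow_zero, Submodule.mem_one]
    rintro _ ⟨c, rfl⟩
    exact ⟨algebraMap K _ c, ⟨c, rfl⟩, by ext v; simp⟩
  | succ n ih =>
    intro t ht
    rw [pow_succ] at ht ⊢
    induction ht using Submodule.mul_induction_on' with
    | mem_mul_mem t₁ ht₁ t₂ ht₂ =>
      obtain ⟨s₁, hs₁, h₁⟩ := ih t₁ ht₁
      obtain ⟨s₂, hs₂, h₂⟩ := h t₂ ht₂
      refine ⟨s₁ * s₂, Submodule.mul_mem_mul hs₁ hs₂, ?_⟩
      rw [End.mul_eq_comp, End.mul_eq_comp, ← LinearMap.comp_assoc, h₁, LinearMap.comp_assoc, h₂,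
        LinearMap.comp_assoc]
    | add t₁ _ t₂ _ ih₁ ih₂ =>
      obtain ⟨s₁, hs₁, h₁⟩ := ih₁
      obtain ⟨s₂, hs₂, h₂⟩ := ih₂
      exact ⟨s₁ + s₂, add_mem hs₁ hs₂, by rw [LinearMap.comp_add, LinearMap.add_comp, h₁, h₂]⟩

theorem isNilpotent_of_intertwining {S : Submodule K (End K V)} {T : Submodule K (End K W)}
    {π : V →ₗ[K] W} (hπ : Function.Surjective π) (h : ∀ t ∈ T, ∃ s ∈ S, π ∘ₗ s = t ∘ₗ π)
    (hS : IsNilpotent S) : IsNilpotent T := by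
  obtain ⟨n, hn⟩ := hS
  refine ⟨n, (Submodule.eq_bot_iff _).2 fun t ht ↦ ?_⟩
  obtain ⟨s, hs, hst⟩ := exists_mem_pow_intertwining h n t ht
  obtain rfl : s = 0 := by simpa [hn] using hs
  exact (LinearMap.cancel_right hπ).1 (by rw [← hst, LinearMap.comp_zero, LinearMap.zero_comp])

variable (L : Type*) [LieRing L] [LieAlgebra K L] [LieRingModule L V] [LieModule K L V]

theorem apply_mem_lowerCentralSeries_of_mem_range_toEnd_pow (n : ℕ) :
    ∀ t ∈ (LieModule.toEnd K L V : L →ₗ[K] End K V).range ^ n,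
      ∀ v, t v ∈ LieModule.lowerCentralSeries K L V n := by
  induction n with
  | zero => simp
  | succ n ih =>
    intro t ht v
    rw [pow_succ'] at ht
    induction ht using Submodule.mul_induction_on' with
    | mem_mul_mem _ hx t ht =>
      obtain ⟨x, rfl⟩ := hx
      rw [LieModule.lowerCentralSeries_succ]
      exact LieSubmodule.lie_mem_lie (LieSubmodule.mem_top x) (ih t ht v)
    | add _ _ _ _ h₁ h₂ => exact add_mem h₁ h₂

theorem isNilpotent_range_toEnd [LieModule.IsNilpotent L V] :
    IsNilpotent (LieModule.toEnd K L V : L →ₗ[K] End K V).range := by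
  obtain ⟨n, hn⟩ := LieModule.IsNilpotent.nilpotent K L V
  refine ⟨n, (Submodule.eq_bot_iff _).2 fun t ht ↦ LinearMap.ext fun v ↦ ?_⟩
  simpa [hn] using apply_mem_lowerCentralSeries_of_mem_range_toEnd_pow L n t ht v

end NilpotentSubspaces

section LieTripleSystems

variable {K L : Type*} [CommRing K] [LieRing L] [LieAlgebra K L]

/-- A subspace of a Lie algebra is a Lie triple system if it is closed under the ternary product
`⁅⁅x, y⁆, z⁆`; like a subspace of odd elements, it need not be closed under the bracket. -/
def IsLieTripleSystem (S : Submodule K L) : Prop :=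
  ∀ x ∈ S, ∀ y ∈ S, ∀ z ∈ S, ⁅⁅x, y⁆, z⁆ ∈ S

/-- The subspace `[S, S]` spanned by the brackets of two elements of `S`. For a Lie triple system
it is the even part of the Lie algebra generated by `S`. -/
def bracketSpan (S : Submodule K L) : Submodule K L :=
  Submodule.map₂ (ad K L : L →ₗ[K] End K L) S S

variable {S : Submodule K L}

theorem lie_mem_bracketSpan {x y : L} (hx : x ∈ S) (hy : y ∈ S) : ⁅x, y⁆ ∈ bracketSpan S :=
  Submodule.apply_mem_map₂ (ad K L : L →ₗ[K] End K L) hx hy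

theorem lie_mem_bracketSpan_of_normalizes {z t : L} (hz : ∀ x ∈ S, ⁅z, x⁆ ∈ S)
    (ht : t ∈ bracketSpan S) : ⁅z, t⁆ ∈ bracketSpan S := by
  suffices bracketSpan S ≤ (bracketSpan S).comap (ad K L z) from this ht
  refine Submodule.map₂_le.2 fun x hx y hy ↦ ?_
  change ⁅z, ⁅x, y⁆⁆ ∈ bracketSpan S
  rw [leibniz_lie]
  exact add_mem (lie_mem_bracketSpan (hz x hx) hy) (lie_mem_bracketSpan hx (hz y hy))

namespace IsLieTripleSystem

theorem lie_mem (hS : IsLieTripleSystem S) {t x : L} (ht : t ∈ bracketSpan S) (hx : x ∈ S) :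
    ⁅t, x⁆ ∈ S := by
  suffices bracketSpan S ≤ S.comap ((ad K L : L →ₗ[K] End K L).flip x) from this ht
  exact Submodule.map₂_le.2 fun y hy z hz ↦ hS y hy z hz x hx

/-- The Lie algebra `S + [S, S]` generated by a Lie triple system `S`, known as its standard
embedding. The sum is not required to be direct. -/
def lieSubalgebra (hS : IsLieTripleSystem S) : LieSubalgebra K L where
  __ := S ⊔ bracketSpan S
  lie_mem' := by
    intro u v hu hv
    obtain ⟨x, hx, s, hs, rfl⟩ := Submodule.mem_sup.1 hu
    obtain ⟨y, hy, t, ht, rfl⟩ := Submodule.mem_sup.1 hv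
    have hxt : ⁅x, t⁆ ∈ S := by
      rw [← lie_skew]
      exact neg_mem (hS.lie_mem ht hx)
    have hst : ⁅s, t⁆ ∈ bracketSpan S :=
      lie_mem_bracketSpan_of_normalizes (fun z hz ↦ hS.lie_mem hs hz) ht
    rw [add_lie, lie_add, lie_add, add_comm ⁅x, y⁆, add_add_add_comm]
    exact Submodule.add_mem_sup (add_mem hxt (hS.lie_mem hs hy))
      (add_mem (lie_mem_bracketSpan hx hy) hst)

theorem mem_lieSubalgebra (hS : IsLieTripleSystem S) {u : L} :
    u ∈ hS.lieSubalgebra ↔ ∃ x ∈ S, ∃ t ∈ bracketSpan S, x + t = u :=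
  Submodule.mem_sup

theorem lie_mem_lieSubalgebra (hS : IsLieTripleSystem S) {z u : L} (hz : ∀ x ∈ S, ⁅z, x⁆ ∈ S)
    (hu : u ∈ hS.lieSubalgebra) : ⁅z, u⁆ ∈ hS.lieSubalgebra := by
  obtain ⟨x, hx, t, ht, rfl⟩ := hS.mem_lieSubalgebra.1 hu
  rw [lie_add]
  exact Submodule.add_mem_sup (hz x hx) (lie_mem_bracketSpan_of_normalizes hz ht)

end IsLieTripleSystem

end LieTripleSystems

section CartanCriterion

variable {K V U : Type*} [Field K] [AddCommGroup V] [Module K V] [AddCommGroup U] [Module K U]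

/-- The extension of a Lie algebra `R` of operators on `V` by an operator `δ` normalizing it, acting
on `V ⊕ U`: here `R` acts by zero on `U`, while `δ` acts on `U` through a chosen operator `ε`. -/
def twistedExtension (R : LieSubalgebra K (End K V)) (δ : End K V) (hδ : ∀ x ∈ R, ⁅δ, x⁆ ∈ R)
    (ε : End K U) : LieSubalgebra K (End K (V × U)) where
  carrier := {z | ∃ x ∈ R, ∃ c : K, z = (x + c • δ).prodMap (c • ε)}
  zero_mem' := ⟨0, zero_mem _, 0, by ext <;> simp⟩
  add_mem' := by
    rintro _ _ ⟨x, hx, a, rfl⟩ ⟨y, hy, b, rfl⟩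
    refine ⟨x + y, add_mem hx hy, a + b, ?_⟩
    rw [← LinearMap.prodMap_add, add_smul, add_smul, add_add_add_comm]
  smul_mem' := by
    rintro a _ ⟨x, hx, b, rfl⟩
    refine ⟨a • x, R.smul_mem a hx, a * b, ?_⟩
    rw [← LinearMap.prodMap_smul, smul_add, mul_smul, mul_smul]
  lie_mem' := by
    rintro _ _ ⟨x, hx, a, rfl⟩ ⟨y, hy, b, rfl⟩
    refine ⟨⁅x, y⁆ + a • ⁅δ, y⁆ - b • ⁅δ, x⁆, sub_mem (add_mem (R.lie_mem hx hy)
      (R.smul_mem a (hδ y hy))) (R.smul_mem b (hδ x hx)), 0, ?_⟩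
    ext v <;> simp [Ring.lie_def, smul_sub, smul_smul, mul_comm a b]
    abel

theorem traceForm_twistedExtension_eq_zero [FiniteDimensional K V] [FiniteDimensional K U]
    {R : LieSubalgebra K (End K V)} {δ : End K V} (hδ : ∀ x ∈ R, ⁅δ, x⁆ ∈ R) {ε : End K U}
    (hR : ∀ x ∈ R, ∀ y ∈ R, LinearMap.trace K V (x * y) = 0)
    (hδR : ∀ x ∈ R, LinearMap.trace K V (δ * x) = 0)
    (hε : LinearMap.trace K U (ε * ε) = -LinearMap.trace K V (δ * δ)) :
    LieModule.traceForm K (twistedExtension R δ hδ ε) (V × U) = 0 := by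
  ext ⟨_, x, hx, a, rfl⟩ ⟨_, y, hy, b, rfl⟩
  have hRδ : LinearMap.trace K V (x * δ) = 0 := by rw [LinearMap.trace_mul_comm, hδR x hx]
  change LinearMap.trace K _ ((x + a • δ).prodMap (a • ε) * (y + b • δ).prodMap (b • ε)) = 0
  rw [LinearMap.prodMap_mul, LinearMap.trace_prodMap']
  simp [mul_add, add_mul, hR x hx y hy, hδR y hy, hRδ, hε]

theorem exists_trace_mul_self_eq [NeZero (2 : K)] (c : K) :
    ∃ ε : End K (Fin 2 → K), LinearMap.trace K _ (ε * ε) = c := by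
  refine ⟨Matrix.toLin' !![0, c / 2; 1, 0], ?_⟩
  rw [End.mul_eq_comp, ← Matrix.toLin'_mul, Matrix.trace_toLin'_eq]
  simp [Matrix.trace_fin_two]

theorem isNilpotent_map_ad_of_trace_mul_eq_zero [CharZero K] [FiniteDimensional K V]
    {R : LieSubalgebra K (End K V)} {δ : End K V} (hδ : ∀ x ∈ R, ⁅δ, x⁆ ∈ R)
    (hR : ∀ x ∈ R, ∀ y ∈ R, LinearMap.trace K V (x * y) = 0)
    (hδR : ∀ x ∈ R, LinearMap.trace K V (δ * x) = 0) :
    IsNilpotent (R.toSubmodule.map (ad K (End K V) δ)) := by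
  -- `tr δ²` need not vanish, so Cartan's criterion is applied after cancelling it on a plane.
  obtain ⟨ε, hε⟩ := exists_trace_mul_self_eq (-LinearMap.trace K V (δ * δ))
  let L := twistedExtension R δ hδ ε
  have : LieModule.IsNilpotent (derivedSeries K L 1) (V × (Fin 2 → K)) :=
    LieModule.isNilpotent_derivedSeries_of_traceForm_eq_zero
      (traceForm_twistedExtension_eq_zero hδ hR hδR hε)
  refine isNilpotent_of_intertwining LinearMap.fst_surjective ?_
    (isNilpotent_range_toEnd (K := K) (V := V × (Fin 2 → K)) (derivedSeries K L 1))
  rintro _ ⟨x, hx, rfl⟩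
  let x' : L := ⟨x.prodMap 0, x, hx, 0, by simp⟩
  let δ' : L := ⟨δ.prodMap ε, 0, zero_mem _, 1, by simp⟩
  have mem : ⁅δ', x'⁆ ∈ derivedSeries K L 1 :=
    LieSubmodule.lie_mem_lie (LieSubmodule.mem_top _) (LieSubmodule.mem_top _)
  refine ⟨_, ⟨⟨_, mem⟩, rfl⟩, ?_⟩
  ext <;> simp [Ring.lie_def, x', δ']

end CartanCriterion

section OddTripleSystems

variable {K V : Type*} [AddCommGroup V]

theorem trace_mul_eq_zero_of_commute_of_anticommute [CommRing K] [IsAddTorsionFree K] [Module K V]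
    {σ z x : End K V} (hσ : σ * σ = 1) (hz : Commute σ z) (hx : σ * x = -(x * σ)) :
    LinearMap.trace K V (z * x) = 0 := by
  refine self_eq_neg.1 ?_
  calc LinearMap.trace K V (z * x)
    _ = LinearMap.trace K V (σ * (σ * (z * x))) := by rw [← mul_assoc, hσ, one_mul]
    _ = LinearMap.trace K V (σ * z * x * σ) := by
      rw [LinearMap.trace_mul_comm]
      simp only [mul_assoc]
    _ = -LinearMap.trace K V (z * (σ * σ) * x) := by
      rw [hz.eq, mul_assoc, mul_assoc, ← neg_eq_iff_eq_neg.2 hx]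
      simp [mul_assoc]
    _ = -LinearMap.trace K V (z * x) := by rw [hσ, mul_one]

theorem trace_mul_eq_zero_of_mem_bracketSpan [CommRing K] [Module K V] {S : Submodule K (End K V)}
    (htr : ∀ x ∈ S, ∀ y ∈ S, LinearMap.trace K V (x * y) = 0) {z t : End K V}
    (hz : ∀ x ∈ S, ⁅z, x⁆ ∈ S) (ht : t ∈ bracketSpan S) : LinearMap.trace K V (z * t) = 0 := by
  suffices bracketSpan S ≤ (LinearMap.trace K V ∘ₗ LinearMap.mulLeft K z).ker from this ht
  refine Submodule.map₂_le.2 fun x hx y hy ↦ ?_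
  change LinearMap.trace K V (z * ⁅x, y⁆) = 0
  rw [← LinearMap.trace_lie_mul_eq, htr _ (hz x hx) y hy]

theorem commute_of_mem_bracketSpan [CommRing K] [Module K V] {S : Submodule K (End K V)}
    {σ t : End K V} (hodd : ∀ x ∈ S, σ * x = -(x * σ)) (ht : t ∈ bracketSpan S) : Commute σ t := by
  suffices bracketSpan S ≤ (ad K (End K V) σ).ker from commute_iff_lie_eq.2 (this ht)
  refine Submodule.map₂_le.2 fun x hx y hy ↦ ?_
  change ⁅σ, ⁅x, y⁆⁆ = 0
  have h (x y) (hx : x ∈ S) (hy : y ∈ S) : σ * (x * y) = x * y * σ := by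
    rw [← mul_assoc, hodd x hx, neg_mul, mul_assoc, hodd y hy, mul_neg, neg_neg, mul_assoc]
  rw [Ring.lie_def, Ring.lie_def, mul_sub, sub_mul, h x y hx hy, h y x hy hx, sub_self]

namespace IsLieTripleSystem

section TraceForm

variable [CommRing K] [IsAddTorsionFree K] [Module K V] {S : Submodule K (End K V)} {σ : End K V}

theorem trace_mul_eq_zero_of_commute (hS : IsLieTripleSystem S) (hσ : σ * σ = 1)
    (hodd : ∀ x ∈ S, σ * x = -(x * σ)) (htr : ∀ x ∈ S, ∀ y ∈ S, LinearMap.trace K V (x * y) = 0)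
    {z : End K V} (hzσ : Commute σ z) (hz : ∀ x ∈ S, ⁅z, x⁆ ∈ S) {u : End K V}
    (hu : u ∈ hS.lieSubalgebra) :
    LinearMap.trace K V (z * u) = 0 := by
  obtain ⟨x, hx, t, ht, rfl⟩ := hS.mem_lieSubalgebra.1 hu
  rw [mul_add, map_add, trace_mul_eq_zero_of_commute_of_anticommute hσ hzσ (hodd x hx),
    trace_mul_eq_zero_of_mem_bracketSpan htr hz ht, add_zero]

theorem trace_mul_eq_zero (hS : IsLieTripleSystem S) (hσ : σ * σ = 1)
    (hodd : ∀ x ∈ S, σ * x = -(x * σ)) (htr : ∀ x ∈ S, ∀ y ∈ S, LinearMap.trace K V (x * y) = 0)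
    {u v : End K V} (hu : u ∈ hS.lieSubalgebra) (hv : v ∈ hS.lieSubalgebra) :
    LinearMap.trace K V (u * v) = 0 := by
  obtain ⟨x, hx, t, ht, rfl⟩ := hS.mem_lieSubalgebra.1 hu
  have even_mul : LinearMap.trace K V (t * v) = 0 :=
    hS.trace_mul_eq_zero_of_commute hσ hodd htr (commute_of_mem_bracketSpan hodd ht)
      (fun _ hy ↦ hS.lie_mem ht hy) hv
  obtain ⟨y, hy, s, hs, rfl⟩ := hS.mem_lieSubalgebra.1 hv
  have odd_mul_even : LinearMap.trace K V (x * s) = 0 := by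
    rw [LinearMap.trace_mul_comm]
    exact trace_mul_eq_zero_of_commute_of_anticommute hσ (commute_of_mem_bracketSpan hodd hs)
      (hodd x hx)
  rw [add_mul, map_add, even_mul, mul_add, map_add, htr x hx y hy, odd_mul_even, add_zero, add_zero]

end TraceForm

theorem isNilpotent_of_map_ad_eq [Field K] [CharZero K] [Module K V] [FiniteDimensional K V]
    {S : Submodule K (End K V)} (hS : IsLieTripleSystem S) {σ δ : End K V} (hσ : σ * σ = 1)
    (hodd : ∀ x ∈ S, σ * x = -(x * σ)) (htr : ∀ x ∈ S, ∀ y ∈ S, LinearMap.trace K V (x * y) = 0)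
    (hδσ : Commute σ δ) (hδ : S.map (ad K (End K V) δ) = S) : IsNilpotent S := by
  have hδS (x) (hx : x ∈ S) : ⁅δ, x⁆ ∈ S := hδ.le (Submodule.mem_map_of_mem hx)
  obtain ⟨n, hn⟩ := isNilpotent_map_ad_of_trace_mul_eq_zero
    (fun _ hu ↦ hS.lie_mem_lieSubalgebra hδS hu)
    (fun _ hu _ hv ↦ hS.trace_mul_eq_zero hσ hodd htr hu hv)
    (fun _ hu ↦ hS.trace_mul_eq_zero_of_commute hσ hodd htr hδσ hδS hu)
  have hle : S ≤ hS.lieSubalgebra.toSubmodule.map (ad K (End K V) δ) :=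
    hδ.ge.trans (Submodule.map_mono le_sup_left)
  exact ⟨n, le_bot_iff.1 ((pow_le_pow_left' hle n).trans hn.le)⟩

end IsLieTripleSystem

end OddTripleSystems

section Derivations

variable (K J : Type*) [CommRing K] [NonUnitalNonAssocRing J] [Module K J]
  [SMulCommClass K J J] [IsScalarTower K J J]

/-- The Lie algebra `Der J` of derivations of a nonassociative algebra `J`. -/
def derivationLieAlgebra : LieSubalgebra K (End K J) where
  carrier := {D | ∀ x y, D (x * y) = D x * y + x * D y}
  zero_mem' := by simp
  add_mem' := by
    intro D E hD hE x y
    simp only [LinearMap.add_apply, hD x y, hE x y, add_mul, mul_add]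
    abel
  smul_mem' := by
    intro c D hD x y
    simp only [LinearMap.smul_apply, hD x y, smul_add, smul_mul_assoc, mul_smul_comm]
  lie_mem' := by
    intro D E hD hE x y
    simp only [Ring.lie_def, LinearMap.sub_apply, End.mul_apply, hD _ _, hE _ _, map_add,
      sub_mul, mul_sub]
    abel

/-- Lie triple algebras, also called almost Jordan algebras: the commutators of left multiplications
are derivations. They are usually also required to be commutative, which is left to the type
class of `J`. -/
def IsLieTripleAlgebra : Prop :=
  ∀ x y, ⁅LinearMap.mul K J x, LinearMap.mul K J y⁆ ∈ derivationLieAlgebra K J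

variable {K J}

theorem lie_mul_of_mem_derivationLieAlgebra {D : End K J} (hD : D ∈ derivationLieAlgebra K J)
    (x : J) : ⁅D, LinearMap.mul K J x⁆ = LinearMap.mul K J (D x) := by
  ext y
  simp [Ring.lie_def, hD x y]

theorem trace_mul_eq_zero_of_surjective {d : End K J} (hd : d ∈ derivationLieAlgebra K J)
    (hsurj : Function.Surjective d) (x : J) : LinearMap.trace K J (LinearMap.mul K J x) = 0 := by
  obtain ⟨y, rfl⟩ := hsurj x
  rw [← lie_mul_of_mem_derivationLieAlgebra hd, LinearMap.trace_lie]

end Derivations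

theorem isLieTripleAlgebra_of_isCommJordan {K J : Type*} [CommRing K] [NonUnitalNonAssocCommRing J]
    [IsCommJordan J] [IsAddTorsionFree J] [Module K J] [SMulCommClass K J J]
    [IsScalarTower K J J] : IsLieTripleAlgebra K J := by
  have linearized (a b c w : J) : a * (b * c * w) - b * c * (a * w) +
      (b * (c * a * w) - c * a * (b * w)) + (c * (a * b * w) - a * b * (c * w)) = 0 := by
    have h := DFunLike.congr_fun (two_nsmul_lie_lmul_lmul_add_add_eq_zero a b c) w
    exact (smul_eq_zero_iff_right two_ne_zero).1 h
  intro z w x y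
  have hz := linearized z x y w
  have hw := linearized w x y z
  change z * (w * (x * y)) - w * (z * (x * y)) =
    (z * (w * x) - w * (z * x)) * y + x * (z * (w * y) - w * (z * y))
  rw [sub_mul, mul_sub]
  simp only [mul_comm] at hz hw ⊢
  linear_combination (norm := abel) hz - hw

section Antidiag

variable {K A B : Type*} [CommRing K] [AddCommGroup A] [Module K A] [AddCommGroup B] [Module K B]

/-- The operator on `A ⊕ B` with block matrix `!![0, g; f, 0]`. -/
def antidiag (f : A →ₗ[K] B) (g : B →ₗ[K] A) : End K (A × B) :=
  (g ∘ₗ LinearMap.snd K A B).prod (f ∘ₗ LinearMap.fst K A B)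

theorem antidiag_apply (f : A →ₗ[K] B) (g : B →ₗ[K] A) (v : A × B) :
    antidiag f g v = (g v.2, f v.1) := rfl

theorem antidiag_mul_antidiag (f f' : A →ₗ[K] B) (g g' : B →ₗ[K] A) :
    antidiag f g * antidiag f' g' = (g ∘ₗ f').prodMap (f ∘ₗ g') := rfl

end Antidiag

namespace IsLieTripleAlgebra

section Representation

variable {K J : Type*} [CommRing K] [NonUnitalNonAssocRing J] [Module K J]
  [SMulCommClass K J J] [IsScalarTower K J J] (hJ : IsLieTripleAlgebra K J)

/-- The inner derivation `⁅L_x, L_y⁆`, where `L_x` is the multiplication by `x`. -/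
def innerDerivation : J →ₗ[K] J →ₗ[K] derivationLieAlgebra K J :=
  LinearMap.mk₂ K (fun x y ↦ ⟨⁅LinearMap.mul K J x, LinearMap.mul K J y⁆, hJ x y⟩)
    (fun _ _ _ ↦ Subtype.ext (by simp)) (fun _ _ _ ↦ Subtype.ext (by simp))
    (fun _ _ _ ↦ Subtype.ext (by simp)) (fun _ _ _ ↦ Subtype.ext (by simp))

theorem innerDerivation_apply (x y z : J) :
    (hJ.innerDerivation x y : End K J) z = x * (y * z) - y * (x * z) := rfl

theorem innerDerivation_skew (x y : J) : -hJ.innerDerivation x y = hJ.innerDerivation y x :=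
  Subtype.ext (lie_skew (LinearMap.mul K J y) (LinearMap.mul K J x))

theorem lie_innerDerivation (D : derivationLieAlgebra K J) (x y : J) :
    ⁅D, hJ.innerDerivation x y⁆ = hJ.innerDerivation ((D : End K J) x) y +
      hJ.innerDerivation x ((D : End K J) y) := by
  apply Subtype.ext
  change ⁅(D : End K J), ⁅LinearMap.mul K J x, LinearMap.mul K J y⁆⁆ =
    ⁅LinearMap.mul K J ((D : End K J) x), LinearMap.mul K J y⁆ +
      ⁅LinearMap.mul K J x, LinearMap.mul K J ((D : End K J) y)⁆
  rw [leibniz_lie, lie_mul_of_mem_derivationLieAlgebra D.2, lie_mul_of_mem_derivationLieAlgebra D.2]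

/-- The map `(T, a) ↦ (-T x, x a)`, one of the two blocks of the action `odd x` of `x : J`. -/
def lower (x : J) : (derivationLieAlgebra K J × J) →ₗ[K] J × J :=
  (-(LinearMap.applyₗ x ∘ₗ (derivationLieAlgebra K J).toSubmodule.subtype)).prodMap
    (LinearMap.mul K J x)

/-- The map `(z, b) ↦ (⁅L_x, L_z⁆, x b)`, the other block of the action `odd x` of `x : J`. -/
def raise (x : J) : (J × J) →ₗ[K] derivationLieAlgebra K J × J :=
  (hJ.innerDerivation x).prodMap (LinearMap.mul K J x)

theorem lower_apply (x : J) (T : derivationLieAlgebra K J) (a : J) :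
    lower x (T, a) = (-(T : End K J) x, x * a) := rfl

theorem raise_apply (x z b : J) : hJ.raise x (z, b) = (hJ.innerDerivation x z, x * b) := rfl

/-- The action of `J` on the sum of `Der J ⊕ J`, the adjoint module of the Lie algebra with bracket
`⁅x, y⁆ = ⁅L_x, L_y⁆` on its odd part `J`, and of `J ⊗ K²`, where `x` acts by `L_x` followed by the
exchange of the two copies of `J`. The four summands are ordered as `((Der J, J), (J, J))`,
the even ones coming first: the adjoint module contributes the first entry of each pair. -/
def odd : J →ₗ[K] End K ((derivationLieAlgebra K J × J) × (J × J)) where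
  toFun x := antidiag (lower x) (hJ.raise x)
  map_add' x y := by
    refine LinearMap.ext fun ⟨⟨T, a⟩, ⟨z, b⟩⟩ ↦ ?_
    simp only [LinearMap.add_apply, antidiag_apply, lower_apply, raise_apply, map_add, add_mul,
      neg_add, Prod.mk_add_mk]
  map_smul' c x := by
    refine LinearMap.ext fun ⟨⟨T, a⟩, ⟨z, b⟩⟩ ↦ ?_
    simp only [LinearMap.smul_apply, antidiag_apply, lower_apply, raise_apply, map_smul,
      smul_mul_assoc, smul_neg, Prod.smul_mk, RingHom.id_apply]

/-- The action of `Der J` on the module on which `J` acts by `odd`. -/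
def even (D : derivationLieAlgebra K J) : End K ((derivationLieAlgebra K J × J) × (J × J)) :=
  ((ad K (derivationLieAlgebra K J) D).prodMap D).prodMap ((D : End K J).prodMap D)

theorem odd_apply (x : J) (T : derivationLieAlgebra K J) (a z b : J) :
    hJ.odd x ((T, a), (z, b)) = ((hJ.innerDerivation x z, x * b), (-(T : End K J) x, x * a)) :=
  rfl

theorem even_apply (D T : derivationLieAlgebra K J) (a z b : J) :
    even D ((T, a), (z, b)) = ((⁅D, T⁆, (D : End K J) a), ((D : End K J) z, (D : End K J) b)) :=
  rfl

theorem lie_even_odd (D : derivationLieAlgebra K J) (x : J) :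
    ⁅even D, hJ.odd x⁆ = hJ.odd ((D : End K J) x) := by
  refine LinearMap.ext fun ⟨⟨T, a⟩, ⟨z, b⟩⟩ ↦ ?_
  simp only [Ring.lie_def, LinearMap.sub_apply, End.mul_apply, odd_apply, even_apply,
    lie_innerDerivation, D.2 _ _, LieSubalgebra.coe_bracket, Prod.mk_sub_mk, map_neg]
  congr 2 <;> abel

theorem map_ad_even_range_odd {d : derivationLieAlgebra K J}
    (hsurj : Function.Surjective (d : End K J)) :
    hJ.odd.range.map (ad K _ (even d)) = hJ.odd.range :=
  calc hJ.odd.range.map (ad K _ (even d))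
    _ = (hJ.odd ∘ₗ (d : End K J)).range := by
      rw [← LinearMap.range_comp]
      exact congrArg _ (LinearMap.ext (hJ.lie_even_odd d))
    _ = hJ.odd.range := LinearMap.range_comp_of_range_eq_top _ (LinearMap.range_eq_top.2 hsurj)

end Representation

section Commutative

variable {K J : Type*} [CommRing K] [NonUnitalNonAssocCommRing J] [Module K J]
  [SMulCommClass K J J] [IsScalarTower K J J] (hJ : IsLieTripleAlgebra K J)

theorem lie_odd_odd (x y : J) : ⁅hJ.odd x, hJ.odd y⁆ = even (hJ.innerDerivation x y) := by
  refine LinearMap.ext fun ⟨⟨T, a⟩, ⟨z, b⟩⟩ ↦ ?_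
  rw [even_apply, ← lie_skew _ T, lie_innerDerivation, Ring.lie_def]
  simp only [LinearMap.sub_apply, End.mul_apply, odd_apply, innerDerivation_apply,
    Prod.mk_sub_mk, map_neg, innerDerivation_skew, mul_comm z]
  congr 2
  · rw [← hJ.innerDerivation_skew x]
    abel
  · rw [mul_comm y x]
    abel

theorem isLieTripleSystem_range_odd : IsLieTripleSystem hJ.odd.range := by
  rintro _ ⟨x, rfl⟩ _ ⟨y, rfl⟩ _ ⟨z, rfl⟩
  rw [lie_odd_odd, lie_even_odd]
  exact ⟨_, rfl⟩

end Commutative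

section FiniteDimensional

variable {K J : Type*} [Field K] [NonUnitalNonAssocCommRing J] [Module K J]
  [SMulCommClass K J J] [IsScalarTower K J J] [FiniteDimensional K J]
  (hJ : IsLieTripleAlgebra K J)

/- The first diagonal block of the product is `z ↦ -⁅L_y, L_z⁆ x`, that is `L_{yx} - L_y L_x`, and
the second one is `L_x L_y`: the traces of the quadratic terms cancel. -/
theorem trace_lower_comp_raise (x y : J) :
    LinearMap.trace K _ (lower x ∘ₗ hJ.raise y) =
      LinearMap.trace K J (LinearMap.mul K J (y * x)) := by
  have h : (-LinearMap.applyₗ x ∘ₗ (derivationLieAlgebra K J).toSubmodule.subtype) ∘ₗ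
      hJ.innerDerivation y =
        LinearMap.mul K J (y * x) - LinearMap.mul K J y * LinearMap.mul K J x := by
    ext z
    change -(y * (z * x) - z * (y * x)) = y * x * z - y * (x * z)
    rw [neg_sub, mul_comm z x, mul_comm z]
  rw [lower, raise, LinearMap.prodMap_comp, LinearMap.trace_prodMap', h, map_sub,
    LinearMap.trace_mul_comm, End.mul_eq_comp, sub_add_cancel]

theorem trace_odd_mul_odd (x y : J) :
    LinearMap.trace K _ (hJ.odd x * hJ.odd y) =
      2 * LinearMap.trace K J (LinearMap.mul K J (x * y)) := by
  change LinearMap.trace K _ (antidiag _ _ * antidiag _ _) = _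
  rw [antidiag_mul_antidiag, LinearMap.trace_prodMap', LinearMap.trace_comp_comm',
    trace_lower_comp_raise, trace_lower_comp_raise, mul_comm y, two_mul]

theorem isNilpotent_range_odd [CharZero K] {d : End K J}
    (hd : d ∈ derivationLieAlgebra K J) (hsurj : Function.Surjective d) :
    IsNilpotent hJ.odd.range := by
  let σ : End K ((derivationLieAlgebra K J × J) × (J × J)) :=
    LinearMap.prodMap LinearMap.id (-LinearMap.id)
  refine hJ.isLieTripleSystem_range_odd.isNilpotent_of_map_ad_eq (σ := σ) (δ := even ⟨d, hd⟩)
    ?_ ?_ ?_ ?_ (hJ.map_ad_even_range_odd hsurj)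
  · ext <;> simp [σ]
  · rintro _ ⟨x, rfl⟩
    refine LinearMap.ext fun ⟨⟨T, a⟩, ⟨z, b⟩⟩ ↦ ?_
    simp [σ, odd_apply]
  · rintro _ ⟨x, rfl⟩ _ ⟨y, rfl⟩
    rw [trace_odd_mul_odd, trace_mul_eq_zero_of_surjective hd hsurj, mul_zero]
  · refine LinearMap.ext fun ⟨⟨T, a⟩, ⟨z, b⟩⟩ ↦ ?_
    simp [σ, even_apply]

theorem isNilpotent_range_mul [CharZero K] (hJ : IsLieTripleAlgebra K J) {d : End K J}
    (hd : d ∈ derivationLieAlgebra K J) (hsurj : Function.Surjective d) :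
    IsNilpotent (LinearMap.mul K J).range := by
  let π : ((derivationLieAlgebra K J × J) × (J × J)) →ₗ[K] J :=
    (LinearMap.snd K _ J).coprod (LinearMap.snd K J J)
  have hπ : Function.Surjective π := fun a ↦ ⟨((0, a), 0), by simp [π]⟩
  refine isNilpotent_of_intertwining hπ ?_ (hJ.isNilpotent_range_odd hd hsurj)
  rintro _ ⟨x, rfl⟩
  refine ⟨_, ⟨x, rfl⟩, LinearMap.ext fun ⟨⟨T, a⟩, ⟨z, b⟩⟩ ↦ ?_⟩
  simp [π, odd_apply, mul_add, add_comm]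

end FiniteDimensional

end IsLieTripleAlgebra

section Products

variable (K : Type*) {J : Type*} [CommRing K] [NonUnitalNonAssocCommRing J] [Module K J]
  [SMulCommClass K J J] [IsScalarTower K J J]

/- One of the two factors of a product of `2 ^ (k + 1)` elements is itself a product of at least
`2 ^ k` elements. -/
theorem IsProd.exists_mem_pow_range_mul {n : ℕ} {x : J} (hx : IsProd n x) {k : ℕ} (hk : 2 ^ k ≤ n) :
    ∃ T ∈ (LinearMap.mul K J).range ^ k, ∃ a, T a = x := by
  induction k generalizing n x with
  | zero => exact ⟨1, by rw [pow_zero]; exact Submodule.one_le.1 le_rfl, x, rfl⟩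
  | succ k ih =>
    have mul_mem (u : J) {v : J} (hv : ∃ T ∈ (LinearMap.mul K J).range ^ k, ∃ a, T a = v) :
        ∃ T ∈ (LinearMap.mul K J).range ^ (k + 1), ∃ a, T a = u * v := by
      obtain ⟨T, hT, a, rfl⟩ := hv
      exact ⟨LinearMap.mul K J u * T, pow_succ' (LinearMap.mul K J).range k ▸
        Submodule.mul_mem_mul ⟨u, rfl⟩ hT, a, rfl⟩
    cases hx with
    | single => exact absurd hk (Nat.one_lt_two_pow k.succ_ne_zero).not_ge
    | @mul m n u v hu hv =>
      obtain hm | hn : 2 ^ k ≤ m ∨ 2 ^ k ≤ n := by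
        rw [pow_succ] at hk
        omega
      · rw [mul_comm]
        exact mul_mem v (ih hu hm)
      · exact mul_mem u (ih hv hn)

theorem exists_isProd_eq_zero_of_isNilpotent_range_mul
    (h : IsNilpotent (LinearMap.mul K J).range) :
    ∃ n : ℕ, 1 ≤ n ∧ ∀ x : J, IsProd n x → x = 0 := by
  obtain ⟨k, hk⟩ := h
  refine ⟨2 ^ k, Nat.one_le_two_pow, fun x hx ↦ ?_⟩
  obtain ⟨T, hT, a, rfl⟩ := hx.exists_mem_pow_range_mul K le_rfl
  obtain rfl : T = 0 := by simpa [hk] using hT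
  rfl

end Products

theorem jordan_with_invertible_derivation_is_nilpotent_general
    {K J : Type*} [Field K] [CharZero K] [NonUnitalNonAssocCommRing J] [Module K J]
    [SMulCommClass K J J] [IsScalarTower K J J] [FiniteDimensional K J]
    (hJ : IsLieTripleAlgebra K J) {d : End K J} (hd : d ∈ derivationLieAlgebra K J)
    (hsurj : Function.Surjective d) : ∃ n : ℕ, 1 ≤ n ∧ ∀ x : J, IsProd n x → x = 0 :=
  exists_isProd_eq_zero_of_isNilpotent_range_mul K (hJ.isNilpotent_range_mul hd hsurj)

/-- A finite-dimensional Jordan algebra over a field of characteristic zero admitting an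
invertible (bijective) derivation is nilpotent. -/
theorem jordan_with_invertible_derivation_is_nilpotent
    {F J : Type*} [Field F] [CharZero F]
    [NonUnitalNonAssocRing J] [Module F J] [SMulCommClass F J J] [IsScalarTower F J J]
    [FiniteDimensional F J]
    (comm : ∀ x y : J, x * y = y * x)
    (jordan : ∀ x y : J, ((x * x) * y) * x = (x * x) * (y * x))
    (d : J →ₗ[F] J)
    (hd : ∀ x y : J, d (x * y) = d x * y + x * d y)
    (hbij : Function.Bijective d) :
    ∃ n : ℕ, 1 ≤ n ∧ ∀ x : J, IsProd n x → x = 0 := by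
  let _ : NonUnitalNonAssocCommRing J := { ‹NonUnitalNonAssocRing J› with mul_comm := comm }
  have : IsAddTorsionFree J := .of_isTorsionFree F J
  have : IsCommJordan J := ⟨fun a b ↦ by
    rw [mul_comm (a * b), mul_comm a b, mul_comm a, mul_comm b (a * a), ← jordan,
      mul_comm (a * a * b)]⟩
  exact jordan_with_invertible_derivation_is_nilpotent_general
    isLieTripleAlgebra_of_isCommJordan hd hbij.surjective
end

section
/- Let J be a finite-dimensional Jordan algebra over a field F of characteristic not equal to 2, and suppose every F-linear endomorphism of J is a quasiderivation. Then either J has zero multiplication (x*y = 0 for all x, y ∈ J), or J is a field (J is nonzero, its multiplication is associative and has a unit element, and every nonzero element of J is invertible). -/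
/-!
If every endomorphism `f` is a quasiderivation, each relation `x * y = x' * y'` in the algebra
yields `f x * y + x * f y = f x' * y' + x' * f y'`, for any `f` one likes. Endomorphisms with
prescribed values on two independent vectors then show that a nonzero element of square zero kills
the whole multiplication, and that otherwise there are no zero divisors at all. In the latter case
left multiplication by `y ≠ 0` is onto by finite dimensionality, so `x * x = y * z` for some `z`;
if `y` were not proportional to `x`, a projection `f` onto the line of `y` with `f x = 0` would give
`y * (z + f z) = 0`, hence `f z = -z`. As `-1 ≠ 1` is not an eigenvalue of a projection, `z = 0`
and `x * x = 0`.
So the algebra is a line on which squares of nonzero elements are nonzero, i.e. a copy of `F`.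
-/

section Preliminaries

open Module Submodule

theorem exists_linearMap_apply_eq_zero_and_apply_eq {K V W : Type*} [DivisionRing K]
    [AddCommGroup V] [Module K V] [AddCommGroup W] [Module K W] {x y : V}
    (hy : y ∉ span K {x}) (w : W) : ∃ f : V →ₗ[K] W, f x = 0 ∧ f y = w := by
  obtain ⟨f, hf, hfy⟩ := LinearMap.exists_extend_of_notMem (0 : span K {x} →ₗ[K] W) hy w
  exact ⟨f, by simpa using congr($hf ⟨x, mem_span_singleton_self x⟩), hfy⟩

theorem exists_ne_zero_and_assoc_and_exists_inv_of_mulEquiv {G M : Type*} [GroupWithZero G]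
    [MulZeroClass M] (φ : G ≃* M) :
    (∃ x : M, x ≠ 0) ∧ (∀ x y z : M, (x * y) * z = x * (y * z)) ∧
      ∃ e : M, (∀ x : M, e * x = x ∧ x * e = x) ∧
        ∀ x : M, x ≠ 0 → ∃ y : M, x * y = e ∧ y * x = e := by
  refine ⟨⟨φ 1, by simp⟩, ?assoc, φ 1, ?one, ?inv⟩
  case assoc =>
    intro x y z
    apply φ.symm.injective
    simp only [map_mul, mul_assoc]
  case one =>
    refine φ.surjective.forall.mpr fun a ↦ ?_
    simp only [← map_mul, one_mul, mul_one, and_self]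
  case inv =>
    refine φ.surjective.forall.mpr fun a ha ↦ ⟨φ a⁻¹, ?_⟩
    have ha0 : a ≠ 0 := by simpa using ha
    simp only [← map_mul, mul_inv_cancel₀ ha0, inv_mul_cancel₀ ha0, and_self]

variable {F A : Type*} [DivisionRing F] [NonUnitalNonAssocRing A] [Module F A] [SMulCommClass F A A]
  [IsScalarTower F A A]

theorem exists_isIdempotentElem_of_mul_self_ne_zero (hA : finrank F A = 1) {x : A}
    (hx : x * x ≠ 0) : ∃ e : A, e ≠ 0 ∧ IsIdempotentElem e := by
  have hx0 : x ≠ 0 := by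
    rintro rfl
    exact hx (mul_zero 0)
  obtain ⟨c, hc⟩ := (finrank_eq_one_iff_of_nonzero' x hx0).mp hA (x * x)
  have hc0 : c ≠ 0 := by
    rintro rfl
    exact hx (by rw [← hc, zero_smul])
  refine ⟨c⁻¹ • x, smul_ne_zero (inv_ne_zero hc0) hx0, ?_⟩
  rw [IsIdempotentElem, smul_mul_smul_comm, ← hc, smul_smul, inv_mul_cancel_right₀ hc0]

theorem exists_linearEquiv_map_mul_of_isIdempotentElem (hA : finrank F A = 1) {e : A}
    (he0 : e ≠ 0) (he : IsIdempotentElem e) :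
    ∃ φ : F ≃ₗ[F] A, ∀ a b : F, φ (a * b) = φ a * φ b := by
  have hbij : Function.Bijective (LinearMap.toSpanSingleton F A e) :=
    ⟨smul_left_injective F he0, (finrank_eq_one_iff_of_nonzero' e he0).mp hA⟩
  refine ⟨LinearEquiv.ofBijective _ hbij, fun a b ↦ ?_⟩
  simp only [LinearEquiv.ofBijective_apply, LinearMap.toSpanSingleton_apply, smul_mul_smul_comm,
    he.eq]

end Preliminaries

section Quasiderivation

open Module

/-- The endomorphism `f` is a quasiderivation: some linear `Q` satisfies the Leibniz rule
`Q (x * y) = f x * y + x * f y`. A derivation is the case `Q = f`. -/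
def IsQuasiderivation {R A : Type*} [Semiring R] [NonUnitalNonAssocSemiring A] [Module R A]
    (f : A →ₗ[R] A) : Prop :=
  ∃ Q : A →ₗ[R] A, ∀ x y : A, Q (x * y) = f x * y + x * f y

namespace IsQuasiderivation

theorem map_mul_add_mul_map_eq {R A : Type*} [Semiring R] [NonUnitalNonAssocSemiring A]
    [Module R A] {f : A →ₗ[R] A} (hf : IsQuasiderivation f) {x y x' y' : A}
    (h : x * y = x' * y') : f x * y + x * f y = f x' * y' + x' * f y' := by
  obtain ⟨Q, hQ⟩ := hf
  rw [← hQ, ← hQ, h]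

theorem map_mul_add_mul_map_eq_zero {R A : Type*} [Semiring R] [NonUnitalNonAssocSemiring A]
    [Module R A] {f : A →ₗ[R] A} (hf : IsQuasiderivation f) {x y : A}
    (h : x * y = 0) : f x * y + x * f y = 0 := by
  simpa using hf.map_mul_add_mul_map_eq (h.trans (mul_zero 0).symm)

end IsQuasiderivation

variable {F J : Type*} [DivisionRing F] [NonUnitalNonAssocCommRing J] [Module F J]

theorem mul_eq_zero_of_mul_self_eq_zero_of_forall_isQuasiderivation (h2 : (2 : F) ≠ 0)
    (hq : ∀ f : J →ₗ[F] J, IsQuasiderivation f) {x : J} (hx : x ≠ 0) (hxx : x * x = 0)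
    (w v : J) : w * v = 0 := by
  have exists_map (w : J) : ∃ f : J →ₗ[F] J, f x = w := by
    obtain ⟨f, -, hf⟩ := exists_linearMap_apply_eq_zero_and_apply_eq (K := F) (x := 0) (y := x)
      (by simpa using hx) w
    exact ⟨f, hf⟩
  have mul_x (u : J) : x * u = 0 := by
    obtain ⟨f, rfl⟩ := exists_map u
    have h : (2 : F) • (x * f x) = 0 := by
      rw [two_smul]
      simpa only [mul_comm (f x)] using (hq f).map_mul_add_mul_map_eq_zero hxx
    exact (smul_eq_zero_iff_right h2).mp h
  obtain ⟨f, rfl⟩ := exists_map w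
  simpa only [mul_x, add_zero] using (hq f).map_mul_add_mul_map_eq_zero (mul_x v)

theorem noZeroDivisors_of_forall_isQuasiderivation [SMulCommClass F J J] (h2 : (2 : F) ≠ 0)
    (hq : ∀ f : J →ₗ[F] J, IsQuasiderivation f) (hmul : ∃ x y : J, x * y ≠ 0) :
    NoZeroDivisors J := by
  have eq_zero_of_mul_self {x : J} (hxx : x * x = 0) : x = 0 := by
    obtain ⟨u, v, huv⟩ := hmul
    by_contra hx
    exact huv (mul_eq_zero_of_mul_self_eq_zero_of_forall_isQuasiderivation h2 hq hx hxx u v)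
  refine ⟨fun {x y} hxy ↦ ?_⟩
  by_cases hy : y ∈ Submodule.span F {x}
  · obtain ⟨a, rfl⟩ := Submodule.mem_span_singleton.mp hy
    rw [mul_smul_comm, smul_eq_zero] at hxy
    rcases hxy with rfl | hxx
    · exact .inr (zero_smul F x)
    · exact .inl (eq_zero_of_mul_self hxx)
  · obtain ⟨f, hfx, hfy⟩ := exists_linearMap_apply_eq_zero_and_apply_eq hy x
    have hxx : x * x = 0 := by
      simpa [hfx, hfy] using (hq f).map_mul_add_mul_map_eq_zero hxy
    exact .inl (eq_zero_of_mul_self hxx)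

theorem mem_span_singleton_of_mul_self_eq_mul {A : Type*} [NonUnitalNonAssocRing A] [Module F A]
    [NoZeroDivisors A] (h2 : (2 : F) ≠ 0) (hq : ∀ f : A →ₗ[F] A, IsQuasiderivation f)
    {x y z : A} (hx : x ≠ 0) (h : x * x = y * z) : y ∈ Submodule.span F {x} := by
  by_contra hy
  obtain ⟨g, hgx, hgy⟩ := exists_linearMap_apply_eq_zero_and_apply_eq hy (1 : F)
  have hy0 : y ≠ 0 := by
    rintro rfl
    exact hy (Submodule.zero_mem _)
  have hz : z + g z • y = 0 := by
    have hyz : 0 = y * (z + g z • y) := by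
      simpa [hgx, hgy, mul_add] using (hq (g.smulRight y)).map_mul_add_mul_map_eq h
    exact (mul_eq_zero.mp hyz.symm).resolve_left hy0
  have hgz : g z = 0 := by
    have h2gz : 2 * g z = 0 := by simpa [hgy, two_mul] using congr(g $hz)
    exact (mul_eq_zero.mp h2gz).resolve_left h2
  have hxx : x * x = 0 := by
    rw [hgz, zero_smul, add_zero] at hz
    rw [h, hz, mul_zero]
  exact hx (mul_self_eq_zero.mp hxx)

theorem finrank_eq_one_of_forall_isQuasiderivation {A : Type*} [NonUnitalNonAssocRing A]
    [Module F A] [SMulCommClass F A A] [FiniteDimensional F A] [NoZeroDivisors A] [Nontrivial A]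
    (h2 : (2 : F) ≠ 0) (hq : ∀ f : A →ₗ[F] A, IsQuasiderivation f) : finrank F A = 1 := by
  obtain ⟨x, hx⟩ := exists_ne (0 : A)
  refine (finrank_eq_one_iff_of_nonzero' x hx).mpr fun y ↦ ?_
  rcases eq_or_ne y 0 with rfl | hy
  · exact ⟨0, zero_smul F x⟩
  have hsurj : Function.Surjective (LinearMap.mulLeft F y) :=
    LinearMap.injective_iff_surjective.mp (mul_right_injective₀ hy)
  obtain ⟨z, hz⟩ := hsurj (x * x)
  exact Submodule.mem_span_singleton.mp (mem_span_singleton_of_mul_self_eq_mul h2 hq hx hz.symm)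

theorem jordan_all_endomorphisms_quasiderivations_general [SMulCommClass F J J]
    [IsScalarTower F J J] [FiniteDimensional F J] (hchar : ringChar F ≠ 2)
    (hq : ∀ f : J →ₗ[F] J, IsQuasiderivation f) :
    (∀ x y : J, x * y = 0) ∨ ∃ φ : F ≃ₗ[F] J, ∀ a b : F, φ (a * b) = φ a * φ b := by
  refine or_iff_not_imp_left.mpr fun hmul ↦ ?_
  push Not at hmul
  have h2 : (2 : F) ≠ 0 := Ring.two_ne_zero hchar
  have := noZeroDivisors_of_forall_isQuasiderivation h2 hq hmul
  obtain ⟨x, y, hxy⟩ := hmul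
  have hx : x ≠ 0 := left_ne_zero_of_mul hxy
  have := nontrivial_of_ne x 0 hx
  have hJ : finrank F J = 1 := finrank_eq_one_of_forall_isQuasiderivation h2 hq
  obtain ⟨e, he0, he⟩ := exists_isIdempotentElem_of_mul_self_ne_zero hJ (mul_self_ne_zero.mpr hx)
  exact exists_linearEquiv_map_mul_of_isIdempotentElem hJ he0 he

end Quasiderivation

/-- If `J` is a finite-dimensional Jordan algebra over a field of characteristic ≠ 2
in which every linear endomorphism is a quasiderivation, then `J` has zero
multiplication or `J` is a field. -/
theorem jordan_all_endomorphisms_quasiderivations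
    {F J : Type*} [Field F] (hchar : ringChar F ≠ 2)
    [NonUnitalNonAssocRing J] [Module F J] [SMulCommClass F J J] [IsScalarTower F J J]
    [FiniteDimensional F J]
    (comm : ∀ x y : J, x * y = y * x)
    (jordan : ∀ x y : J, ((x * x) * y) * x = (x * x) * (y * x))
    (hq : ∀ f : J →ₗ[F] J, ∃ Q : J →ₗ[F] J, ∀ x y : J, Q (x * y) = f x * y + x * f y) :
    (∀ x y : J, x * y = 0) ∨
      ((∃ x : J, x ≠ 0) ∧ (∀ x y z : J, (x * y) * z = x * (y * z)) ∧
        ∃ e : J, (∀ x : J, e * x = x ∧ x * e = x) ∧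
          ∀ x : J, x ≠ 0 → ∃ y : J, x * y = e ∧ y * x = e) := by
  let : NonUnitalNonAssocCommRing J := { ‹NonUnitalNonAssocRing J› with mul_comm := comm }
  exact (jordan_all_endomorphisms_quasiderivations_general hchar hq).imp_right
    fun ⟨φ, hφ⟩ ↦
      exists_ne_zero_and_assoc_and_exists_inv_of_mulEquiv { φ.toEquiv with map_mul' := hφ }
end
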